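/- arXiv:1106.0928 — 3 statements merged into one kernel-verified Lean document; each statement's English description precedes it below -/
import Mathlib

section
/- For every ℝ-linear connection ∇ of L on E and every End_C(E)-valued ℝ-linear n-form ω on L, one has d_ρ(Tr_* ω) = Tr_*(d^{∇̄} ω); that is, d_ρ ∘ Tr_* = Tr_* ∘ d^{∇̄}. -/
open Module

/-- The trace over `C` of an `ℝ`-linear endomorphism of `E` whose underlying
function happens to be `C`-linear (and `0` otherwise). -/
noncomputable def trR (C : Type*) {E : Type*} [CommRing C] [AddCommGroup E]
    [Module ℝ E] [Module C E] (e : E →ₗ[ℝ] E) : C :=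
  letI := Classical.propDecidable
  if h : ∃ g : E →ₗ[C] E, ⇑g = ⇑e then LinearMap.trace C E h.choose else 0

/-- An ℝ-linear connection of the Lie algebra `L` (with anchor `ρ`) on the `C`-module `E`. -/
def IsConn {L C E : Type*} [LieRing L] [LieAlgebra ℝ L] [CommRing C] [Algebra ℝ C]
    [AddCommGroup E] [Module ℝ E] [Module C E]
    (ρ : L →ₗ[ℝ] Derivation ℝ C C) (D : L →ₗ[ℝ] Module.End ℝ E) : Prop :=
  ∀ (a : L) (f : C) (e : E), D a (f • e) = f • D a e + ρ a f • e

/-- The curvature of an ℝ-linear map `D : L →ₗ[ℝ] End ℝ E`. -/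
def curv {L E : Type*} [LieRing L] [LieAlgebra ℝ L] [AddCommGroup E] [Module ℝ E]
    (D : L →ₗ[ℝ] Module.End ℝ E) (a b : L) : Module.End ℝ E :=
  D a * D b - D b * D a - D ⁅a, b⁆

/-- The curvature as an `End ℝ E`-valued 2-form. -/
def curv2 {L E : Type*} [LieRing L] [LieAlgebra ℝ L] [AddCommGroup E] [Module ℝ E]
    (D : L →ₗ[ℝ] Module.End ℝ E) : (Fin 2 → L) → Module.End ℝ E :=
  fun a => curv D (a 0) (a 1)

/-- The Chevalley–Eilenberg style differential of a `V`-valued `n`-form on `L`,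
with respect to an action `act` of `L` on `V`:
`(dω)(a₁,…,a_{n+1}) = Σᵢ (−1)^{i+1} act(aᵢ)(ω(a₁,…,âᵢ,…)) +
  Σ_{i<j} (−1)^{i+j} ω(⁅aᵢ,aⱼ⁆, a₁,…,âᵢ,…,âⱼ,…)`. -/
def dGen {L V : Type*} [LieRing L] [AddCommGroup V] (act : L → V → V) :
    {n : ℕ} → ((Fin n → L) → V) → ((Fin (n + 1) → L) → V)
  | 0, ω, a => act (a 0) (ω Fin.elim0)
  | (m + 1), ω, a =>
      (∑ i : Fin (m + 2), (-1 : ℤ) ^ (i : ℕ) • act (a i) (ω (fun k => a (i.succAbove k)))) +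
      ∑ i : Fin (m + 2), ∑ j : Fin (m + 2),
        if h : (i : ℕ) < (j : ℕ) then
          (-1 : ℤ) ^ ((i : ℕ) + (j : ℕ)) • ω (Fin.cons ⁅a i, a j⁆
            (fun k : Fin m => a (j.succAbove
              ((⟨(i : ℕ), by have := j.isLt; omega⟩ : Fin (m + 1)).succAbove k))))
        else 0

/-- The differential `d_ρ` on `C`-valued ℝ-linear forms on `L`. -/
def dRho {L C : Type*} [LieRing L] [LieAlgebra ℝ L] [CommRing C] [Algebra ℝ C]
    (ρ : L →ₗ[ℝ] Derivation ℝ C C) {n : ℕ} (ω : (Fin n → L) → C) :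
    (Fin (n + 1) → L) → C :=
  dGen (fun a c => ρ a c) ω

/-- The differential `d^{∇̄}` on `End ℝ E`-valued ℝ-linear forms on `L`,
where `∇̄_a = [∇_a, ·]`. -/
def dEnd {L E : Type*} [LieRing L] [LieAlgebra ℝ L] [AddCommGroup E] [Module ℝ E]
    (D : L →ₗ[ℝ] Module.End ℝ E) {n : ℕ} (ω : (Fin n → L) → Module.End ℝ E) :
    (Fin (n + 1) → L) → Module.End ℝ E :=
  dGen (fun a φ => D a * φ - φ * D a) ω

/-- The wedge product (with composition as multiplication of values) of
`End ℝ E`-valued forms: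
`(ω∧η)(a₁,…,a_{m+n}) = (1/(m!·n!)) Σ_{τ} sgn τ · ω(a_{τ(1)},…) ∘ η(a_{τ(m+1)},…)`. -/
noncomputable def wedge {L E : Type*} [AddCommGroup E] [Module ℝ E] {m n : ℕ}
    (ω : (Fin m → L) → Module.End ℝ E) (η : (Fin n → L) → Module.End ℝ E) :
    (Fin (m + n) → L) → Module.End ℝ E :=
  fun a => ((m.factorial * n.factorial : ℝ))⁻¹ •
    ∑ τ : Equiv.Perm (Fin (m + n)), ((Equiv.Perm.sign τ : ℤ) •
      (ω (fun i => a (τ (Fin.castAdd n i))) * η (fun j => a (τ (Fin.natAdd m j)))))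

/-- The `p`-th wedge power of an `End ℝ E`-valued 2-form. -/
noncomputable def wpow {L E : Type*} [AddCommGroup E] [Module ℝ E]
    (R : (Fin 2 → L) → Module.End ℝ E) :
    (p : ℕ) → (Fin (2 * p) → L) → Module.End ℝ E
  | 0 => fun _ => 1
  | (p + 1) => fun a => wedge R (wpow R p) (fun i => a (Fin.cast (by omega) i))

/-- The `k`-th wedge power of an `End ℝ E`-valued 1-form. -/
noncomputable def wpow1 {L E : Type*} [AddCommGroup E] [Module ℝ E]
    (θ : (Fin 1 → L) → Module.End ℝ E) :
    (k : ℕ) → (Fin k → L) → Module.End ℝ E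
  | 0 => fun _ => 1
  | (k + 1) => fun a => wedge θ (wpow1 θ k) (fun i => a (Fin.cast (by omega) i))

/-- The Chern character form `ch_p(∇) = Tr_*((R^∇)^{∧p})`. -/
noncomputable def chp {L E : Type*} (C : Type*) [LieRing L] [LieAlgebra ℝ L]
    [CommRing C] [AddCommGroup E] [Module ℝ E] [Module C E]
    (D : L →ₗ[ℝ] Module.End ℝ E) (p : ℕ) : (Fin (2 * p) → L) → C :=
  fun a => trR C (wpow (curv2 D) p a)

/-- `∫₀ˢ f(t) dt` for a function `f : ℝ → C` given by a polynomial with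
coefficients in the ℝ-algebra `C` (and `0` if `f` is not polynomial). -/
noncomputable def intPolyTo {C : Type*} [CommRing C] [Algebra ℝ C] (s : ℝ) (f : ℝ → C) : C :=
  letI := Classical.propDecidable
  if h : ∃ P : Polynomial C, ∀ t : ℝ, f t = Polynomial.eval (algebraMap ℝ C t) P then
    ∑ k ∈ Finset.range (h.choose.natDegree + 1),
      (s ^ (k + 1) / ((k : ℝ) + 1)) • h.choose.coeff k
  else 0

/-- The valuewise integral over the standard 2-simplex
`Δ² = {(t₁,t₂) : t₁ ≥ 0, t₂ ≥ 0, t₁ + t₂ ≤ 1}` of a `C`-valued polynomial function. -/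
noncomputable def intSimplex2 {C : Type*} [CommRing C] [Algebra ℝ C] (f : ℝ → ℝ → C) : C :=
  intPolyTo 1 (fun t1 => intPolyTo (1 - t1) (fun t2 => f t1 t2))

/-- The Chern–Simons transgression form for a pair of ℝ-linear connections:
`cs_p(∇⁰,∇¹) = p·∫₀¹ Tr_*(λ ∧ (R_t)^{∧(p−1)}) dt` where `λ = ∇¹ − ∇⁰` and
`R_t` is the curvature of `∇⁰ + t•λ`. -/
noncomputable def csPair {L E : Type*} (C : Type*) [LieRing L] [LieAlgebra ℝ L]
    [CommRing C] [Algebra ℝ C] [AddCommGroup E] [Module ℝ E] [Module C E]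
    (D0 D1 : L →ₗ[ℝ] Module.End ℝ E) (p : ℕ) : (Fin (2 * (p - 1) + 1) → L) → C :=
  fun a => (p : ℝ) • intPolyTo 1 (fun t =>
    trR C (wedge (fun v : Fin 1 → L => (D1 - D0) (v 0))
      (wpow (curv2 (D0 + t • (D1 - D0))) (p - 1))
      (fun i => a (Fin.cast (by omega) i))))

/-- The Chern–Simons transgression form for a triple of ℝ-linear connections:
`cs_p(∇⁰,∇¹,∇²) = −p(p−1)·∫_{Δ²} Tr_*(λ₁ ∧ λ₂ ∧ (R_{(t₁,t₂)})^{∧(p−2)}) dt₁dt₂`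
where `λᵢ = ∇ⁱ − ∇⁰` and `R_{(t₁,t₂)}` is the curvature of `∇⁰ + t₁•λ₁ + t₂•λ₂`. -/
noncomputable def csTriple {L E : Type*} (C : Type*) [LieRing L] [LieAlgebra ℝ L]
    [CommRing C] [Algebra ℝ C] [AddCommGroup E] [Module ℝ E] [Module C E]
    (D0 D1 D2 : L →ₗ[ℝ] Module.End ℝ E) (p : ℕ) : (Fin (2 * (p - 2) + 2) → L) → C :=
  fun a => (-((p : ℝ) * ((p : ℝ) - 1))) • intSimplex2 (fun t1 t2 =>
    trR C (wedge (fun v : Fin 1 → L => (D1 - D0) (v 0))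
      (wedge (fun v : Fin 1 → L => (D2 - D0) (v 0))
        (wpow (curv2 (D0 + t1 • (D1 - D0) + t2 • (D2 - D0))) (p - 2)))
      (fun i => a (Fin.cast (by omega) i))))


theorem trace_bracket_aux {C E : Type*} [CommRing C] [Algebra ℝ C]
    [AddCommGroup E] [Module ℝ E] [Module C E]
    [Module.Finite C E] [Module.Free C E]
    (δ : Derivation ℝ C C) (D : Module.End ℝ E)
    (hD : ∀ (f : C) (e : E), D (f • e) = f • D e + δ f • e)
    (φ g : E →ₗ[C] E) (hg : ∀ e, g e = D (φ e) - φ (D e)) :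
    LinearMap.trace C E g = δ (LinearMap.trace C E φ) := by
  classical
  let b := Module.Free.chooseBasis C E
  let D0 : E → E := fun e => ∑ i, δ (b.repr e i) • b i
  have hD0 : ∀ (f : C) (e : E), D0 (f • e) = f • D0 e + δ f • e := by
    intro f e
    have h : δ f • e = ∑ i, δ f • b.repr e i • b i := by
      rw [← Finset.smul_sum, b.sum_repr]
    rw [h]
    simp only [D0, Finset.smul_sum, ← Finset.sum_add_distrib]
    refine Finset.sum_congr rfl fun i _ => ?_
    simp only [map_smul, Finsupp.smul_apply, smul_eq_mul, Derivation.leibniz, smul_smul, ← add_smul]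
    congr 1
    ring
  have hadd : ∀ x y, D0 (x + y) = D0 x + D0 y := by
    intro x y
    simp only [D0, map_add, Finsupp.add_apply, add_smul, Finset.sum_add_distrib]
  let Γ : E →ₗ[C] E :=
    { toFun := fun e => D e - D0 e
      map_add' := fun x y => by rw [map_add, hadd]; abel
      map_smul' := fun f x => by
        rw [hD, hD0, RingHom.id_apply, smul_sub]; abel }
  have hb : ∀ i, D0 (b i) = 0 := by
    intro i
    refine Finset.sum_eq_zero fun j _ => ?_
    rw [b.repr_self_apply]
    split_ifs <;> simp
  have hs : LinearMap.trace C E (g - (Γ * φ - φ * Γ)) = δ (LinearMap.trace C E φ) := by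
    rw [LinearMap.trace_eq_matrix_trace C b, LinearMap.trace_eq_matrix_trace C b φ]
    simp only [Matrix.trace, Matrix.diag_apply, map_sum, LinearMap.toMatrix_apply]
    refine Finset.sum_congr rfl fun i _ => ?_
    have h : (g - (Γ * φ - φ * Γ)) (b i) = D0 (φ (b i)) := by
      have h1 : (g - (Γ * φ - φ * Γ)) (b i)
          = g (b i) - ((D (φ (b i)) - D0 (φ (b i))) - φ (D (b i) - D0 (b i))) := rfl
      rw [h1, hg, hb, sub_zero]
      abel
    rw [h]
    simp only [D0]
    rw [b.repr_sum_self]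
  rw [map_sub, map_sub, LinearMap.trace_mul_comm, sub_self, sub_zero] at hs
  exact hs

/-- `e` is `C`-linear with trace `c`. -/
def HasTr (C : Type*) {E : Type*} [CommRing C] [AddCommGroup E]
    [Module ℝ E] [Module C E] (e : E →ₗ[ℝ] E) (c : C) : Prop :=
  ∃ g : E →ₗ[C] E, ⇑g = ⇑e ∧ LinearMap.trace C E g = c

section HasTrLemmas

variable {C E : Type*} [CommRing C] [AddCommGroup E] [Module ℝ E] [Module C E]

theorem HasTr.trR_eq {e : E →ₗ[ℝ] E} {c : C} (h : HasTr C e c) : trR C e = c := by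
  obtain ⟨g, hg, hc⟩ := h
  have hex : ∃ g : E →ₗ[C] E, ⇑g = ⇑e := ⟨g, hg⟩
  unfold trR
  rw [dif_pos hex, ← hc]
  congr 1
  exact DFunLike.coe_injective (hex.choose_spec.trans hg.symm)

theorem HasTr.add {e e' : E →ₗ[ℝ] E} {c c' : C} (h : HasTr C e c) (h' : HasTr C e' c') :
    HasTr C (e + e') (c + c') := by
  obtain ⟨g, hg, rfl⟩ := h
  obtain ⟨g', hg', rfl⟩ := h'
  refine ⟨g + g', ?_, map_add _ _ _⟩
  funext x
  simp [hg, hg']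

theorem HasTr.zsmul {e : E →ₗ[ℝ] E} {c : C} (k : ℤ) (h : HasTr C e c) :
    HasTr C (k • e) (k • c) := by
  obtain ⟨g, hg, rfl⟩ := h
  refine ⟨k • g, ?_, map_zsmul _ _ _⟩
  funext x
  simp [hg]

theorem HasTr.zero : HasTr C (0 : E →ₗ[ℝ] E) (0 : C) :=
  ⟨0, rfl, map_zero _⟩

theorem HasTr.sum {ι : Type*} (s : Finset ι) {e : ι → E →ₗ[ℝ] E} {c : ι → C}
    (h : ∀ i, HasTr C (e i) (c i)) : HasTr C (∑ i ∈ s, e i) (∑ i ∈ s, c i) := by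
  classical
  induction s using Finset.induction_on with
  | empty => simpa using HasTr.zero
  | insert a s ha ih =>
    rw [Finset.sum_insert ha, Finset.sum_insert ha]
    exact (h a).add ih

end HasTrLemmas

/-- `d_ρ ∘ Tr_* = Tr_* ∘ d^{∇̄}` on `End_C(E)`-valued ℝ-linear forms. -/
theorem stmt3 {L : Type*} {C : Type*} {E : Type*}
    [LieRing L] [LieAlgebra ℝ L] [CommRing C] [Algebra ℝ C] [Module C L]
    [AddCommGroup E] [Module ℝ E] [Module C E] [IsScalarTower ℝ C E]
    [Module.Finite C E] [Module.Free C E]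
    (ρ : L →ₗ[ℝ] Derivation ℝ C C)
    (hρ : ∀ (a b : L) (f : C), ρ ⁅a, b⁆ f = ρ a (ρ b f) - ρ b (ρ a f))
    (hLeib : ∀ (a b : L) (f : C), ⁅a, f • b⁆ = f • ⁅a, b⁆ + ρ a f • b)
    (D : L →ₗ[ℝ] Module.End ℝ E) (hD : IsConn ρ D) (n : ℕ)
    (ω : AlternatingMap ℝ L (E →ₗ[C] E) (Fin n)) :
    dRho ρ (fun v => LinearMap.trace C E (ω v))
      = fun v => trR C (dEnd D (fun u => (ω u).restrictScalars ℝ) v) := by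
  funext v
  symm
  apply HasTr.trR_eq
  have key : ∀ (a : L) (φ : E →ₗ[C] E),
      HasTr C (D a * φ.restrictScalars ℝ - φ.restrictScalars ℝ * D a : Module.End ℝ E)
        (ρ a (LinearMap.trace C E φ)) := by
    intro a φ
    let g : E →ₗ[C] E :=
      { toFun := fun e => D a (φ e) - φ (D a e)
        map_add' := fun x y => by simp only [map_add]; abel
        map_smul' := fun f x => by
          rw [map_smul, hD, hD, map_add, map_smul, map_smul, RingHom.id_apply, smul_sub]
          abel }
    exact ⟨g, rfl, trace_bracket_aux (ρ a) (D a) (hD a) φ g fun _ => rfl⟩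
  have key2 : ∀ u, HasTr C ((ω u).restrictScalars ℝ) (LinearMap.trace C E (ω u)) :=
    fun u => ⟨ω u, rfl, rfl⟩
  cases n with
  | zero => exact key _ _
  | succ m =>
    refine HasTr.add (HasTr.sum _ fun i => HasTr.zsmul _ (key _ _))
      (HasTr.sum _ fun i => HasTr.sum _ fun j => ?_)
    split_ifs
    · exact HasTr.zsmul _ (key2 _)
    · exact HasTr.zero
end

section
/- For every ℝ-linear connection ∇ of L on E and every p ≥ 1, the Chern character form ch_p(∇) is closed: d_ρ(ch_p(∇)) = 0. -/
open Module

set_option linter.unusedSectionVars false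

section ChernAux

variable {L A : Type*} [LieRing L] [Ring A] [Algebra ℝ A]

/-- Lie derivative of a form. -/
def ccLie (D : L → A) (b : L) {n : ℕ} (ω : (Fin n → L) → A) : (Fin n → L) → A :=
  fun a => (D b * ω a - ω a * D b) - ∑ k, ω (Function.update a k ⁅b, a k⁆)

/-- Alternating sum over the omitted index. -/
def ccW {n : ℕ} (G : L → (Fin n → L) → A) : (Fin (n + 1) → L) → A :=
  fun a => ∑ q : Fin (n + 1), (-1 : ℤ) ^ (q : ℕ) • G (a q) (fun k => a (q.succAbove k))

/-- Product of a 1-form with a form. -/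
def ccW1 {n : ℕ} (θ : L → A) (η : (Fin n → L) → A) : (Fin (n + 1) → L) → A :=
  ccW (fun c a => θ c * η a)

/-- Product of a 2-form with a form. -/
noncomputable def ccW2 {n : ℕ} (R : L → L → A) (η : (Fin n → L) → A) : (Fin (n + 2) → L) → A :=
  (2⁻¹ : ℝ) • ccW (fun c => ccW1 (R c) η)

/-- Recursive form of the differential. -/
def ccD (D : L → A) : {n : ℕ} → ((Fin n → L) → A) → ((Fin (n + 1) → L) → A)
  | 0, ω, a => ccLie D (a 0) ω (Fin.tail a)
  | (_ + 1), ω, a => ccLie D (a 0) ω (Fin.tail a)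
      - ccD D (fun c => ω (Fin.cons (a 0) c)) (Fin.tail a)

theorem ccD_zero_cons (D : L → A) (ω : (Fin 0 → L) → A) (b : L) (a : Fin 0 → L) :
    ccD D ω (Fin.cons b a : Fin 1 → L) = ccLie D b ω a := rfl

theorem ccD_succ_cons (D : L → A) {n : ℕ} (ω : (Fin (n + 1) → L) → A) (b : L)
    (a : Fin (n + 1) → L) :
    ccD D ω (Fin.cons b a : Fin (n + 2) → L) =
      ccLie D b ω a - ccD D (fun c => ω (Fin.cons b c)) a := rfl

theorem ccLie_add (D : L → A) (b : L) {n : ℕ} (ω η : (Fin n → L) → A) :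
    ccLie D b (ω + η) = ccLie D b ω + ccLie D b η := by
  funext a
  simp only [ccLie, Pi.add_apply, Finset.sum_add_distrib]
  noncomm_ring

theorem ccLie_smul (D : L → A) (b : L) {n : ℕ} (r : ℝ) (ω : (Fin n → L) → A) :
    ccLie D b (r • ω) = r • ccLie D b ω := by
  funext a
  simp only [ccLie, Pi.smul_apply, ← Finset.smul_sum, smul_sub, mul_smul_comm, smul_mul_assoc]

theorem ccD_add (D : L → A) {n : ℕ} (ω η : (Fin n → L) → A) :
    ccD D (ω + η) = ccD D ω + ccD D η := by
  induction n with
  | zero =>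
    funext a
    simp only [ccD, ccLie_add, Pi.add_apply]
  | succ n ih =>
    funext a
    have := ih (fun c => ω (Fin.cons (a 0) c)) (fun c => η (Fin.cons (a 0) c))
    have h2 := congrFun this (Fin.tail a)
    simp only [Pi.add_apply] at h2
    simp only [ccD, ccLie_add, Pi.add_apply]
    change _ - ccD D ((fun c => ω (Fin.cons (a 0) c)) + (fun c => η (Fin.cons (a 0) c))) (Fin.tail a) = _
    rw [h2]; abel

theorem ccD_smul (D : L → A) {n : ℕ} (r : ℝ) (ω : (Fin n → L) → A) :
    ccD D (r • ω) = r • ccD D ω := by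
  induction n with
  | zero =>
    funext a
    simp only [ccD, ccLie_smul, Pi.smul_apply]
  | succ n ih =>
    funext a
    have := ih (fun c => ω (Fin.cons (a 0) c))
    have h2 := congrFun this (Fin.tail a)
    simp only [Pi.smul_apply] at h2
    simp only [ccD, ccLie_smul, Pi.smul_apply, smul_sub]
    change _ - ccD D (r • (fun c => ω (Fin.cons (a 0) c))) (Fin.tail a) = _
    rw [h2]

theorem ccD_sub (D : L → A) {n : ℕ} (ω η : (Fin n → L) → A) :
    ccD D (ω - η) = ccD D ω - ccD D η := by
  have h : ω - η = ω + (-1 : ℝ) • η := by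
    rw [neg_one_smul, sub_eq_add_neg]
  rw [h, ccD_add, ccD_smul, neg_one_smul, sub_eq_add_neg]

theorem ccW_add {n : ℕ} (G H : L → (Fin n → L) → A) : ccW (G + H) = ccW G + ccW H := by
  funext a; simp [ccW, Finset.sum_add_distrib]

theorem ccW_sub {n : ℕ} (G H : L → (Fin n → L) → A) : ccW (G - H) = ccW G - ccW H := by
  funext a; simp [ccW, Finset.sum_sub_distrib, smul_sub]

theorem ccW1_add_left {n : ℕ} (θ θ' : L → A) (η : (Fin n → L) → A) :
    ccW1 (θ + θ') η = ccW1 θ η + ccW1 θ' η := by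
  funext a; simp [ccW1, ccW, Finset.sum_add_distrib, add_mul]

theorem ccW1_sub_left {n : ℕ} (θ θ' : L → A) (η : (Fin n → L) → A) :
    ccW1 (θ - θ') η = ccW1 θ η - ccW1 θ' η := by
  funext a; simp [ccW1, ccW, Finset.sum_sub_distrib, sub_mul, smul_sub]

theorem ccW1_sub_right {n : ℕ} (θ : L → A) (η η' : (Fin n → L) → A) :
    ccW1 θ (η - η') = ccW1 θ η - ccW1 θ η' := by
  funext a; simp [ccW1, ccW, Finset.sum_sub_distrib, mul_sub, smul_sub]

theorem ccW1_add_right {n : ℕ} (θ : L → A) (η η' : (Fin n → L) → A) :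
    ccW1 θ (η + η') = ccW1 θ η + ccW1 θ η' := by
  funext a; simp [ccW1, ccW, Finset.sum_add_distrib, mul_add]

theorem ccW2_sub_right {n : ℕ} (R : L → L → A) (η η' : (Fin n → L) → A) :
    ccW2 R (η - η') = ccW2 R η - ccW2 R η' := by
  simp only [ccW2, ccW1_sub_right, ← smul_sub, ← ccW_sub]
  rfl

theorem ccW2_sub_left {n : ℕ} (R R' : L → L → A) (η : (Fin n → L) → A) :
    ccW2 (R - R') η = ccW2 R η - ccW2 R' η := by
  simp only [ccW2, ← smul_sub, ← ccW_sub, Pi.sub_apply, ccW1_sub_left]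
  rfl

theorem ccW_zero_cons (G : L → (Fin 0 → L) → A) (b : L) (a : Fin 0 → L) :
    ccW G (Fin.cons b a : Fin 1 → L) = G b a := by
  simp [ccW]

theorem cc_cons_succAbove {n : ℕ} (b : L) (a : Fin (n + 1) → L) (q : Fin (n + 1)) :
    (fun k => (Fin.cons b a : Fin (n + 2) → L) (q.succ.succAbove k)) =
      (Fin.cons b (fun k => a (q.succAbove k)) : Fin (n + 1) → L) := by
  funext k
  refine Fin.cases ?_ (fun k => ?_) k
  · simp
  · simp

theorem ccW_succ_cons {n : ℕ} (G : L → (Fin (n + 1) → L) → A) (b : L) (a : Fin (n + 1) → L) :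
    ccW G (Fin.cons b a : Fin (n + 2) → L) =
      G b a - ccW (fun c a' => G c (Fin.cons b a')) a := by
  simp only [ccW]
  rw [Fin.sum_univ_succ]
  simp only [cc_cons_succAbove]
  simp [pow_succ, sub_eq_add_neg]

theorem ccW1_zero_cons (θ : L → A) (η : (Fin 0 → L) → A) (b : L) (a : Fin 0 → L) :
    ccW1 θ η (Fin.cons b a : Fin 1 → L) = θ b * η a := ccW_zero_cons _ _ _

theorem ccW1_succ_cons {n : ℕ} (θ : L → A) (η : (Fin (n + 1) → L) → A) (b : L)
    (a : Fin (n + 1) → L) :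
    ccW1 θ η (Fin.cons b a : Fin (n + 2) → L) =
      θ b * η a - ccW1 θ (fun c => η (Fin.cons b c)) a := ccW_succ_cons _ _ _

theorem ccW2_zero_cons (R : L → L → A) (hR : ∀ x y, R x y = - R y x)
    (η : (Fin 0 → L) → A) (b : L) (a : Fin 1 → L) :
    ccW2 R η (Fin.cons b a : Fin 2 → L) = ccW1 (R b) η a := by
  simp only [ccW2, Pi.smul_apply]
  rw [ccW_succ_cons]
  simp only [ccW1_zero_cons]
  have : (ccW fun c a' => R c b * η a') a = - ccW1 (R b) η a := by
    simp [ccW, ccW1, hR _ b]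
  rw [this, sub_neg_eq_add, ← two_smul ℝ, smul_smul]; norm_num

theorem ccW2_succ_cons {n : ℕ} (R : L → L → A) (hR : ∀ x y, R x y = - R y x)
    (η : (Fin (n + 1) → L) → A) (b : L) (a : Fin (n + 2) → L) :
    ccW2 R η (Fin.cons b a : Fin (n + 3) → L) =
      ccW1 (R b) η a + ccW2 R (fun c => η (Fin.cons b c)) a := by
  simp only [ccW2, Pi.smul_apply]
  rw [ccW_succ_cons]
  simp only [ccW1_succ_cons]
  have : (ccW fun c a' => R c b * η a' - ccW1 (R c) (fun c => η (Fin.cons b c)) a') a =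
      - ccW1 (R b) η a - ccW (fun c => ccW1 (R c) (fun c => η (Fin.cons b c))) a := by
    change ccW ((fun c a' => R c b * η a') - fun c a' => ccW1 (R c) (fun c => η (Fin.cons b c)) a') a = _
    rw [ccW_sub, Pi.sub_apply]
    congr 1
    simp [ccW, ccW1, hR _ b]
  rw [this, sub_sub_eq_add_sub, sub_neg_eq_add, ← sub_eq_zero]
  module

theorem ccLie_W (D : L → A) (b : L) {n : ℕ} (G : L → (Fin n → L) → A) :
    ccLie D b (ccW G) = ccW (fun c => ccLie D b (G c) - G ⁅b, c⁆) := by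
  funext a
  simp only [ccLie, ccW, Finset.mul_sum, Finset.sum_mul, Pi.sub_apply]
  rw [Finset.sum_comm, ← Finset.sum_sub_distrib, ← Finset.sum_sub_distrib]
  refine Finset.sum_congr rfl fun q _ => ?_
  rw [Fin.sum_univ_succAbove _ q]
  have h1 : (fun k => Function.update a q ⁅b, a q⁆ (q.succAbove k)) = fun k => a (q.succAbove k) := by
    funext k; simp [Fin.succAbove_ne]
  have h2 : ∀ i, (fun k => Function.update a (q.succAbove i) ⁅b, a (q.succAbove i)⁆ (q.succAbove k)) =
      Function.update (fun k => a (q.succAbove k)) i ⁅b, a (q.succAbove i)⁆ := by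
    intro i; funext k
    by_cases h : k = i
    · subst h; simp
    · simp [Function.update_of_ne h, Function.update_of_ne (fun h' => h (Fin.succAbove_right_injective h'))]
  have h3 : ∀ i, Function.update a (q.succAbove i) ⁅b, a (q.succAbove i)⁆ q = a q := by
    intro i; exact Function.update_of_ne (Fin.succAbove_ne q i).symm _ _
  simp only [h1, h2, h3, Function.update_self, ← Finset.smul_sum, mul_smul_comm, smul_mul_assoc,
    ← smul_sub, ← smul_add]
  congr 1
  abel

theorem ccLie_mul (D : L → A) (b : L) {n : ℕ} (v : A) (η : (Fin n → L) → A) :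
    ccLie D b (fun a => v * η a) =
      fun a => (D b * v - v * D b) * η a + v * ccLie D b η a := by
  funext a
  simp only [ccLie, ← Finset.mul_sum]
  noncomm_ring

theorem ccLie_W1 (D : L → A) (b : L) {n : ℕ} (θ : L → A) (η : (Fin n → L) → A) :
    ccLie D b (ccW1 θ η) =
      ccW1 (fun c => (D b * θ c - θ c * D b) - θ ⁅b, c⁆) η + ccW1 θ (ccLie D b η) := by
  unfold ccW1
  rw [ccLie_W, ← ccW_add]
  congr 1
  funext c a
  simp only [ccLie_mul, Pi.add_apply, Pi.sub_apply, sub_mul]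
  abel

theorem ccLie_W2 (D : L → A) (b : L) {n : ℕ} (R : L → L → A) (η : (Fin n → L) → A) :
    ccLie D b (ccW2 R η) =
      ccW2 (fun c e => (D b * R c e - R c e * D b) - R c ⁅b, e⁆ - R ⁅b, c⁆ e) η
        + ccW2 R (ccLie D b η) := by
  unfold ccW2
  rw [ccLie_smul, ccLie_W, ← smul_add, ← ccW_add]
  congr 2
  funext c
  rw [ccLie_W1, Pi.add_apply, ← sub_eq_zero]
  change _ - (ccW1 ((fun e => (D b * R c e - R c e * D b) - R c ⁅b, e⁆) - R ⁅b, c⁆) η + _) = 0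
  rw [ccW1_sub_left]
  abel

theorem cc_ext {n : ℕ} {f g : (Fin (n + 1) → L) → A}
    (h : ∀ b (a : Fin n → L), f (Fin.cons b a) = g (Fin.cons b a)) : f = g := by
  funext a
  rw [← Fin.cons_self_tail a]
  exact h _ _

theorem ccD_mul (D : L → A) {n : ℕ} (v : A) (η : (Fin n → L) → A) :
    ccD D (fun a => v * η a) =
      ccW1 (fun c => D c * v - v * D c) η + fun a => v * ccD D η a := by
  induction n with
  | zero =>
    apply cc_ext; intro b a
    rw [ccD_zero_cons, Pi.add_apply, ccW1_zero_cons, ccD_zero_cons, ccLie_mul]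
  | succ n ih =>
    apply cc_ext; intro b a
    rw [ccD_succ_cons, Pi.add_apply, ccW1_succ_cons, ccD_succ_cons, ccLie_mul, ih]
    simp only [Pi.add_apply, mul_sub]
    abel

/-- Differential of a 1-form. -/
def ccD1 (D : L → A) (θ : L → A) : L → L → A := fun b c =>
  (D b * θ c - θ c * D b) - (D c * θ b - θ b * D c) - θ ⁅b, c⁆

theorem ccD1_anti (D : L → A) (θ : L →+ A) (b c : L) : ccD1 D θ b c = - ccD1 D θ c b := by
  have : θ ⁅b, c⁆ = - θ ⁅c, b⁆ := by rw [← lie_skew, map_neg]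
  simp only [ccD1, this]
  abel

theorem ccD1_Lie (D : L → A) (θ : L → A) (b : L) :
    ccD1 D θ b = (fun c => (D b * θ c - θ c * D b) - θ ⁅b, c⁆) - (fun c => D c * θ b - θ b * D c) := by
  funext c; simp only [ccD1, Pi.sub_apply]; abel

theorem ccD_W1 (D : L → A) {n : ℕ} (θ : L →+ A) (η : (Fin n → L) → A) :
    ccD D (ccW1 θ η) = ccW2 (ccD1 D θ) η - ccW1 θ (ccD D η) := by
  induction n with
  | zero =>
    apply cc_ext; intro b a
    rw [ccD_succ_cons, Pi.sub_apply, ccW1_succ_cons, ccW2_zero_cons _ (ccD1_anti D θ), ccLie_W1,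
      ccD1_Lie, ccW1_sub_left]
    simp only [ccD_zero_cons, ccW1_zero_cons, ccD_mul, Pi.add_apply, Pi.sub_apply]
    abel
  | succ n ih =>
    apply cc_ext; intro b a
    rw [ccD_succ_cons, Pi.sub_apply, ccW1_succ_cons, ccW2_succ_cons _ (ccD1_anti D θ), ccLie_W1,
      ccD1_Lie, ccW1_sub_left]
    have e1 : (fun c => ccW1 (⇑θ) η (Fin.cons b c)) =
      (fun c => θ b * η c) - ccW1 θ (fun c => η (Fin.cons b c)) := by
      funext c; rw [ccW1_succ_cons]; rfl
    have e2 : (fun c => ccD D η (Fin.cons b c)) = ccLie D b η - ccD D (fun c => η (Fin.cons b c)) := by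
      funext c; rw [ccD_succ_cons]; rfl
    rw [e1, e2, ccD_sub, ih, ccD_mul, ccW1_sub_right]
    simp only [Pi.add_apply, Pi.sub_apply]
    abel

theorem ccD_W2 (D : L → A) {n : ℕ} (R : L →+ L →+ A) (hR : ∀ x y, R x y = - R y x)
    (hB : ∀ b c e, (D b * R c e - R c e * D b) - R c ⁅b, e⁆ - R ⁅b, c⁆ e = ccD1 D (R b) c e)
    (η : (Fin n → L) → A) :
    ccD D (ccW2 (fun x y => R x y) η) = ccW2 (fun x y => R x y) (ccD D η) := by
  induction n with
  | zero =>
    apply cc_ext; intro b a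
    have e1 : (fun c => ccW2 (fun x y => R x y) η (Fin.cons b c)) = ccW1 (R b) η := by
      funext c; rw [ccW2_zero_cons _ hR]
    rw [ccD_succ_cons, ccW2_succ_cons _ hR, ccLie_W2]
    simp only [hB, ccD_zero_cons, e1, ccD_W1, Pi.add_apply, Pi.sub_apply]
    change ccW2 (ccD1 D (R b)) η a + _ - _ = _
    abel
  | succ n ih =>
    apply cc_ext; intro b a
    have e1 : (fun c => ccW2 (fun x y => R x y) η (Fin.cons b c)) = ccW1 (R b) η +
        ccW2 (fun x y => R x y) (fun c => η (Fin.cons b c)) := by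
      funext c; rw [ccW2_succ_cons _ hR]; rfl
    have e2 : (fun c => ccD D η (Fin.cons b c)) = ccLie D b η - ccD D (fun c => η (Fin.cons b c)) := by
      funext c; rw [ccD_succ_cons]; rfl
    rw [ccD_succ_cons, ccW2_succ_cons _ hR, ccLie_W2, e1, e2, ccD_add, ih, ccD_W1, ccW2_sub_right]
    simp only [hB, Pi.add_apply, Pi.sub_apply]
    change ccW2 (ccD1 D (R b)) η a + _ - _ = _
    abel

end ChernAux

section ChernAux2

variable {L A : Type*} [LieRing L] [Ring A] [Algebra ℝ A]

/-- Antisymmetry of a form under permutations of its arguments. -/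
def ccAnti {n : ℕ} (ω : (Fin n → L) → A) : Prop :=
  ∀ (a : Fin n → L) (σ : Equiv.Perm (Fin n)), ω (fun k => a (σ k)) = (Equiv.Perm.sign σ : ℤ) • ω a

theorem ccAnti_cons {n : ℕ} {ω : (Fin (n + 1) → L) → A} (h : ccAnti ω) (b : L) :
    ccAnti (fun c : Fin n → L => ω (Fin.cons b c)) := by
  intro a σ
  have := h (Fin.cons b a) (Equiv.Perm.decomposeFin.symm (0, σ))
  rw [Equiv.Perm.decomposeFin.symm_sign, if_pos rfl, one_mul] at this
  rw [← this]
  change ω _ = ω _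
  congr 1
  funext k
  refine Fin.cases ?_ (fun k => ?_) k <;> simp

theorem ccAnti_swap {n : ℕ} {ω : (Fin (n + 2) → L) → A} (h : ccAnti ω) (x y : L) (c : Fin n → L) :
    ω (Fin.cons x (Fin.cons y c : Fin (n + 1) → L)) =
      - ω (Fin.cons y (Fin.cons x c : Fin (n + 1) → L)) := by
  have := h (Fin.cons y (Fin.cons x c : Fin (n + 1) → L)) (Equiv.swap 0 1)
  rw [Equiv.Perm.sign_swap (by simp)] at this
  simp only [Units.val_neg, Units.val_one, neg_smul, one_smul] at this
  rw [← this]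
  congr 1
  funext k
  refine Fin.cases ?_ (fun k => Fin.cases ?_ (fun k => ?_) k) k
  · simp
  · simp
  · rw [Equiv.swap_apply_of_ne_of_ne]
    · simp
    · simp
    · intro h; simp [Fin.ext_iff] at h

theorem ccAnti_update {n : ℕ} {ω : (Fin (n + 1) → L) → A} (h : ccAnti ω) (x : L)
    (a : Fin (n + 1) → L) (j : Fin (n + 1)) :
    ω (Fin.cons x (fun k => a (j.succAbove k))) = (-1 : ℤ) ^ (j : ℕ) • ω (Function.update a j x) := by
  have := h (Function.update a j x) j.cycleRange.symm
  rw [Equiv.Perm.sign_symm, Fin.sign_cycleRange] at this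
  push_cast at this
  rw [← this]
  congr 1
  funext k
  refine Fin.cases ?_ (fun k => ?_) k
  · simp
  · simp [Fin.succAbove_ne]

theorem dGen_succ_cons (D : L → A) {n : ℕ} {ω : (Fin (n + 1) → L) → A} (h : ccAnti ω) (b : L)
    (a : Fin (n + 1) → L) :
    dGen (fun a φ => D a * φ - φ * D a) ω (Fin.cons b a : Fin (n + 2) → L) =
      ccLie D b ω a - dGen (fun a φ => D a * φ - φ * D a) (fun c => ω (Fin.cons b c)) a := by
  have hL : (∑ j : Fin (n + 1), (-1 : ℤ) ^ ((j : ℕ) + 1) •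
      ω (Fin.cons ⁅b, a j⁆ (fun k => a (j.succAbove k)))) =
      - ∑ k, ω (Function.update a k ⁅b, a k⁆) := by
    rw [← Finset.sum_neg_distrib]
    refine Finset.sum_congr rfl fun j _ => ?_
    rw [ccAnti_update h, smul_smul, pow_succ, mul_right_comm, ← mul_pow]
    simp
  cases n with
  | zero =>
    simp [dGen, ccLie, Fin.sum_univ_succ] at hL ⊢
    have e : (fun k : Fin 1 => (Fin.cons b a : Fin 2 → L) (Fin.succAbove 1 k)) =
        (Fin.cons b Fin.elim0 : Fin 1 → L) := by
      funext k
      fin_cases k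
      rfl
    rw [hL, e]
    abel
  | succ n =>
    rw [dGen, dGen]
    rw [Fin.sum_univ_succ, Fin.sum_univ_succ (n := n + 2)]
    simp only [cc_cons_succAbove]
    rw [Fin.sum_univ_succ (n := n + 2)]
    simp only [Fin.cons_zero, Fin.cons_succ, Fin.val_zero, Fin.val_succ, lt_irrefl, dite_false,
      Nat.zero_lt_succ, dite_true, zero_add, pow_zero, one_smul, Fin.succAbove_zero]
    have e0 : ∀ j : Fin (n + 2), (fun k : Fin (n + 1) => (Fin.cons b a : Fin (n + 3) → L) (j.succ.succAbove
        ((⟨0, by omega⟩ : Fin (n + 2)).succAbove k))) = fun k => a (j.succAbove k) := by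
      intro j
      funext k
      have : ((⟨0, by omega⟩ : Fin (n + 2)).succAbove k) = k.succ := Fin.succAbove_zero_apply k
      rw [this, Fin.succ_succAbove_succ, Fin.cons_succ]
    have e1 : ∀ (i j : Fin (n + 2)) (hi : (i : ℕ) < n + 1),
        (fun k : Fin (n + 1) => (Fin.cons b a : Fin (n + 3) → L) (j.succ.succAbove
        ((⟨(i : ℕ) + 1, by omega⟩ : Fin (n + 2)).succAbove k))) =
        (Fin.cons b (fun k : Fin n => a (j.succAbove
              ((⟨(i : ℕ), hi⟩ : Fin (n + 1)).succAbove k))) : Fin (n + 1) → L) := by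
      intro i j hi
      have : (⟨(i : ℕ) + 1, by omega⟩ : Fin (n + 2)) = (⟨(i : ℕ), hi⟩ : Fin (n + 1)).succ := rfl
      rw [this]
      funext k
      refine Fin.cases ?_ (fun k => ?_) k
      · simp
      · rw [Fin.succ_succAbove_succ, Fin.succ_succAbove_succ, Fin.cons_succ, Fin.cons_succ]
    have hS : (∑ i : Fin (n + 2), ∑ j : Fin (n + 3),
        if h : (i : ℕ) + 1 < (j : ℕ) then
          (-1 : ℤ) ^ ((i : ℕ) + 1 + (j : ℕ)) • ω (Fin.cons ⁅a i, (Fin.cons b a : Fin (n + 3) → L) j⁆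
            (fun k : Fin (n + 1) => (Fin.cons b a : Fin (n + 3) → L) (j.succAbove
              ((⟨(i : ℕ) + 1, by have := j.isLt; omega⟩ : Fin (n + 2)).succAbove k))))
        else 0) = - ∑ i : Fin (n + 2), ∑ j : Fin (n + 2),
        if h : (i : ℕ) < (j : ℕ) then
          (-1 : ℤ) ^ ((i : ℕ) + (j : ℕ)) • ω (Fin.cons b (Fin.cons ⁅a i, a j⁆
            (fun k : Fin n => a (j.succAbove
              ((⟨(i : ℕ), by have := j.isLt; omega⟩ : Fin (n + 1)).succAbove k))) : Fin (n + 1) → L))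
        else 0 := by
      rw [← Finset.sum_neg_distrib]
      refine Finset.sum_congr rfl fun i _ => ?_
      rw [Fin.sum_univ_succ, ← Finset.sum_neg_distrib, dif_neg (by simp), zero_add]
      refine Finset.sum_congr rfl fun j _ => ?_
      by_cases hij : (i : ℕ) < (j : ℕ)
      · rw [dif_pos hij, dif_pos (by simpa using hij)]
        rw [e1 i j (by have := j.isLt; omega), ccAnti_swap h, Fin.cons_succ, Fin.val_succ, smul_neg]
        congr 2
        ring
      · rw [dif_neg hij, dif_neg (by simpa using hij), neg_zero]
    rw [hS]
    simp only [e0]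
    rw [hL]
    simp only [ccLie, pow_succ, mul_neg, mul_one, neg_smul, Finset.sum_neg_distrib]
    abel

theorem dGen_eq_ccD (D : L → A) {n : ℕ} {ω : (Fin n → L) → A} (h : ccAnti ω) :
    dGen (fun a φ => D a * φ - φ * D a) ω = ccD D ω := by
  induction n with
  | zero =>
    funext a
    simp only [dGen, ccD, ccLie, Finset.univ_eq_empty, Finset.sum_empty, sub_zero]
    rw [Subsingleton.elim (Fin.tail a) Fin.elim0]
  | succ n ih =>
    apply cc_ext; intro b a
    rw [dGen_succ_cons D h, ccD_succ_cons, ih (ccAnti_cons h b)]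

/-- Antisymmetrization. -/
def ccAlt {n : ℕ} (F : (Fin n → L) → A) : (Fin n → L) → A :=
  fun a => ∑ τ : Equiv.Perm (Fin n), (Equiv.Perm.sign τ : ℤ) • F (fun k => a (τ k))

theorem ccAlt_anti {n : ℕ} (F : (Fin n → L) → A) : ccAnti (ccAlt F) := by
  intro a σ
  simp only [ccAlt, Finset.smul_sum]
  rw [← Equiv.sum_comp (Equiv.mulLeft σ)
    (fun τ => (Equiv.Perm.sign σ : ℤ) • (Equiv.Perm.sign τ : ℤ) • F (fun k => a (τ k)))]
  refine Finset.sum_congr rfl fun τ _ => ?_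
  simp only [Equiv.coe_mulLeft, Equiv.Perm.sign_mul, Units.val_mul, smul_smul, Equiv.Perm.mul_apply,
    ← mul_assoc, Int.units_coe_mul_self, one_mul]

theorem ccAlt_of_anti {n : ℕ} {F : (Fin n → L) → A} (h : ccAnti F) :
    ccAlt F = n.factorial • F := by
  funext a
  have : ∀ τ : Equiv.Perm (Fin n), (Equiv.Perm.sign τ : ℤ) • F (fun k => a (τ k)) = F a := by
    intro τ
    rw [h, smul_smul, Int.units_coe_mul_self, one_smul]
  simp only [ccAlt, this, Finset.sum_const, Finset.card_univ, Fintype.card_perm, Fintype.card_fin,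
    Pi.smul_apply]

theorem ccAlt_succ {n : ℕ} (F : (Fin (n + 1) → L) → A) :
    ccAlt F = ccW (fun c => ccAlt (fun a => F (Fin.cons c a))) := by
  funext a
  rw [ccAlt, ccW, Finset.univ_perm_fin_succ, ← Finset.univ_product_univ]
  simp only [Finset.sum_map, Equiv.toEmbedding_apply, Finset.sum_product]
  refine Finset.sum_congr rfl fun q _ => ?_
  have hF : ∀ τ : Equiv.Perm (Fin n), (fun k => a (Equiv.Perm.decomposeFin.symm (q, τ) k)) =
     (Fin.cons (a q) (fun k => a (Equiv.swap 0 q (τ k).succ)) : Fin (n + 1) → L) := by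
    intro τ; funext k
    refine Fin.cases ?_ (fun k => ?_) k <;> simp
  simp only [hF, Equiv.Perm.decomposeFin.symm_sign]
  refine Fin.cases ?_ (fun i => ?_) q
  · simp [ccAlt]
  · have h1 := ccAlt_anti (fun a' => F (Fin.cons (a i.succ) a')) (fun k => a (i.succ.succAbove k))
      (Fin.cycleRange i)
    rw [Fin.sign_cycleRange] at h1
    have h2 : (-1 : ℤ) ^ ((i.succ : Fin (n + 1)) : ℕ) = -(((-1) ^ (i : ℕ) : ℤˣ) : ℤ) := by
      push_cast; rw [Fin.val_succ, pow_succ]; ring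
    rw [h2, neg_smul, ← h1]
    simp only [ccAlt, if_neg (Fin.succ_ne_zero i), Fin.succAbove_cycleRange]
    rw [← Finset.sum_neg_distrib]
    refine Finset.sum_congr rfl fun τ _ => ?_
    simp

end ChernAux2

section ChernAux3

theorem wedge_cast {L E : Type*} [AddCommGroup E] [Module ℝ E] {m n N : ℕ}
    (ω : (Fin m → L) → Module.End ℝ E) (η : (Fin n → L) → Module.End ℝ E) (h : m + n = N)
    (a : Fin N → L) :
    wedge ω η (fun i => a (Fin.cast h i)) = ((m.factorial * n.factorial : ℝ))⁻¹ •
    ∑ τ : Equiv.Perm (Fin N), ((Equiv.Perm.sign τ : ℤ) •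
      (ω (fun i => a (τ (Fin.cast h (Fin.castAdd n i)))) *
        η (fun j => a (τ (Fin.cast h (Fin.natAdd m j)))))) := by
  subst h
  rfl

variable {L E : Type*} [LieRing L] [LieAlgebra ℝ L] [AddCommGroup E] [Module ℝ E]

theorem wpow_succ_alt (R : (Fin 2 → L) → Module.End ℝ E) (p : ℕ) :
    wpow R (p + 1) = (((Nat.factorial 2) * (2 * p).factorial : ℝ))⁻¹ •
      ccAlt (n := 2 * p + 2) (fun c => R ![c 0, c 1] * wpow R p (fun k => c k.succ.succ)) := by
  funext a
  rw [wpow]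
  refine (wedge_cast (N := 2 * p + 2) R (wpow R p) (by omega) a).trans ?_
  rw [Pi.smul_apply]
  congr 1
  refine Finset.sum_congr rfl fun τ _ => ?_
  congr 2
  · congr 1
    funext i
    fin_cases i <;> rfl
  · congr 1
    funext k
    congr 2
    apply Fin.ext
    simp

theorem wpow_anti (R : (Fin 2 → L) → Module.End ℝ E) (p : ℕ) : ccAnti (wpow R p) := by
  cases p with
  | zero =>
    intro a σ
    have : σ = 1 := Subsingleton.elim (α := Equiv.Perm (Fin 0)) _ _
    subst this
    simp
  | succ p =>
    rw [wpow_succ_alt]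
    intro a σ
    have := ccAlt_anti (n := 2 * p + 2)
      (fun c => R ![c 0, c 1] * wpow R p (fun k => c k.succ.succ)) a σ
    refine (congrArg (fun x => (((Nat.factorial 2) * (2 * p).factorial : ℝ))⁻¹ • x) this).trans ?_
    exact smul_comm _ _ _

theorem wpow_succ_W2 (R : (Fin 2 → L) → Module.End ℝ E) (p : ℕ) :
    wpow R (p + 1) = ccW2 (fun x y => R ![x, y]) (wpow R p) := by
  rw [wpow_succ_alt, ccAlt_succ]
  have h : ∀ x y : L, ccAlt (fun a : Fin (2 * p) → L => R ![x, y] * wpow R p a) =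
      (2 * p).factorial • (fun a => R ![x, y] * wpow R p a) := by
    intro x y
    apply ccAlt_of_anti
    intro a σ
    simp only [wpow_anti R p a σ, mul_smul_comm]
  have h2 : ∀ x : L, ccAlt (fun a : Fin (2 * p + 1) → L =>
      (fun c : Fin (2 * p + 2) → L => R ![c 0, c 1] * wpow R p (fun k => c k.succ.succ))
        (Fin.cons x a)) = (2 * p).factorial • ccW1 (fun y => R ![x, y]) (wpow R p) := by
    intro x
    rw [ccAlt_succ]
    have : (fun c => ccAlt (fun a : Fin (2 * p) → L => (fun a : Fin (2 * p + 1) → L =>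
      (fun c : Fin (2 * p + 2) → L => R ![c 0, c 1] * wpow R p (fun k => c k.succ.succ))
        (Fin.cons x a)) (Fin.cons c a))) =
        fun y => (2 * p).factorial • (fun a => R ![x, y] * wpow R p a) := by
      funext y
      rw [← h]
      rfl
    rw [this]
    funext a
    simp only [ccW1, ccW, Pi.smul_apply, Finset.smul_sum]
    exact Finset.sum_congr rfl fun q _ => smul_comm _ _ _
  simp only [h2]
  have hf : ((2 * p).factorial : ℝ) ≠ 0 := by positivity
  funext a
  simp only [ccW2, ccW, Pi.smul_apply, Finset.smul_sum]
  refine Finset.sum_congr rfl fun q _ => ?_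
  rw [← Nat.cast_smul_eq_nsmul ℝ, smul_comm _ ((2 * p).factorial : ℝ), smul_smul]
  congr 1
  rw [Nat.factorial_two]
  push_cast
  field_simp

/-- The curvature as a biadditive map. -/
def curvHom (D : L →ₗ[ℝ] Module.End ℝ E) : L →+ L →+ Module.End ℝ E :=
  AddMonoidHom.mk' (fun x => AddMonoidHom.mk' (fun y => curv D x y) (by
    intro y z; simp only [curv, map_add, lie_add]; noncomm_ring)) (by
    intro y z; ext1 w
    simp only [AddMonoidHom.mk'_apply, AddMonoidHom.add_apply, curv, map_add, add_lie]
    noncomm_ring)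

theorem ccD_wpow (D : L →ₗ[ℝ] Module.End ℝ E) (p : ℕ) : ccD D (wpow (curv2 D) p) = 0 := by
  induction p with
  | zero =>
    funext a
    change ccD (n := 0) D (fun _ => 1) a = 0
    simp [ccD, ccLie]
  | succ p ih =>
    rw [wpow_succ_W2]
    have := ccD_W2 D (curvHom D) (by
      intro x y
      simp only [curvHom, AddMonoidHom.mk'_apply, curv]
      rw [← lie_skew y x, map_neg]; abel) (by
      intro b c e
      have J : D ⁅⁅b, c⁆, e⁆ = D ⁅b, ⁅c, e⁆⁆ - D ⁅c, ⁅b, e⁆⁆ := by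
        rw [← map_sub, lie_lie]
      simp only [ccD1, curvHom, AddMonoidHom.mk'_apply, curv, J]
      noncomm_ring
      ) (wpow (curv2 D) p)
    refine this.trans ?_
    rw [ih]
    funext a
    simp [ccW2, ccW1, ccW]

theorem dEnd_wpow (D : L →ₗ[ℝ] Module.End ℝ E) (p : ℕ) : dEnd D (wpow (curv2 D) p) = 0 := by
  rw [dEnd, dGen_eq_ccD D (wpow_anti _ p), ccD_wpow]

end ChernAux3

section ChernAux4

variable {L C E : Type*} [LieRing L] [LieAlgebra ℝ L] [CommRing C] [Algebra ℝ C]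
    [AddCommGroup E] [Module ℝ E] [Module C E] [IsScalarTower ℝ C E]

theorem trR_of (g : E →ₗ[C] E) (e : E →ₗ[ℝ] E) (h : ⇑g = ⇑e) : trR C e = LinearMap.trace C E g := by
  unfold trR
  have hex : ∃ g : E →ₗ[C] E, ⇑g = ⇑e := ⟨g, h⟩
  rw [dif_pos hex]
  congr 1
  exact DFunLike.coe_injective (hex.choose_spec.trans h.symm)

theorem trR_restrict (g : E →ₗ[C] E) : trR C (g.restrictScalars ℝ) = LinearMap.trace C E g :=
  trR_of g _ rfl

variable (C E) in
/-- The subalgebra of `C`-linear endomorphisms. -/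
def ccCL : Set (Module.End ℝ E) := {e | ∃ g : E →ₗ[C] E, e = g.restrictScalars ℝ}

theorem ccCL_zero : (0 : Module.End ℝ E) ∈ ccCL C E := ⟨0, rfl⟩

theorem ccCL_one : (1 : Module.End ℝ E) ∈ ccCL C E := ⟨LinearMap.id, rfl⟩

theorem ccCL_add {x y : Module.End ℝ E} (hx : x ∈ ccCL C E) (hy : y ∈ ccCL C E) :
    x + y ∈ ccCL C E := by
  obtain ⟨g, rfl⟩ := hx
  obtain ⟨h, rfl⟩ := hy
  exact ⟨g + h, rfl⟩

theorem ccCL_mul {x y : Module.End ℝ E} (hx : x ∈ ccCL C E) (hy : y ∈ ccCL C E) :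
    x * y ∈ ccCL C E := by
  obtain ⟨g, rfl⟩ := hx
  obtain ⟨h, rfl⟩ := hy
  exact ⟨g ∘ₗ h, rfl⟩

theorem ccCL_zsmul {x : Module.End ℝ E} (r : ℤ) (hx : x ∈ ccCL C E) : r • x ∈ ccCL C E := by
  obtain ⟨g, rfl⟩ := hx
  exact ⟨r • g, rfl⟩

theorem ccCL_smul {x : Module.End ℝ E} (r : ℝ) (hx : x ∈ ccCL C E) : r • x ∈ ccCL C E := by
  obtain ⟨g, rfl⟩ := hx
  refine ⟨algebraMap ℝ C r • g, ?_⟩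
  ext e
  simp

theorem ccCL_sum {ι : Type*} (s : Finset ι) (f : ι → Module.End ℝ E)
    (h : ∀ i ∈ s, f i ∈ ccCL C E) : ∑ i ∈ s, f i ∈ ccCL C E :=
  Finset.sum_induction f (· ∈ ccCL C E) (fun _ _ => ccCL_add) ccCL_zero h

theorem trR_zero : trR C (0 : Module.End ℝ E) = 0 := by
  rw [trR_of (0 : E →ₗ[C] E) 0 rfl, map_zero]

theorem trR_add {x y : Module.End ℝ E} (hx : x ∈ ccCL C E) (hy : y ∈ ccCL C E) :
    trR C (x + y) = trR C x + trR C y := by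
  obtain ⟨g, rfl⟩ := hx
  obtain ⟨h, rfl⟩ := hy
  rw [trR_restrict, trR_restrict, ← map_add]
  exact trR_of _ _ rfl

theorem trR_zsmul {x : Module.End ℝ E} (r : ℤ) (hx : x ∈ ccCL C E) :
    trR C (r • x) = r • trR C x := by
  obtain ⟨g, rfl⟩ := hx
  rw [trR_restrict, ← map_zsmul]
  exact trR_of _ _ rfl

theorem trR_sum {ι : Type*} (s : Finset ι) (f : ι → Module.End ℝ E)
    (h : ∀ i ∈ s, f i ∈ ccCL C E) : trR C (∑ i ∈ s, f i) = ∑ i ∈ s, trR C (f i) := by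
  classical
  induction s using Finset.induction_on with
  | empty => simpa using trR_zero
  | insert i s hi ih =>
    rw [Finset.sum_insert hi, Finset.sum_insert hi,
      trR_add (h i (by simp)) (ccCL_sum s f fun j hj => h j (by simp [hj])),
      ih fun j hj => h j (by simp [hj])]

theorem ccCL_of {x : Module.End ℝ E} (h : ∀ (f : C) (e : E), x (f • e) = f • x e) :
    x ∈ ccCL C E :=
  ⟨{ toFun := x, map_add' := map_add x, map_smul' := h }, rfl⟩

theorem ccCL_curv (ρ : L →ₗ[ℝ] Derivation ℝ C C)
    (hρ : ∀ (a b : L) (f : C), ρ ⁅a, b⁆ f = ρ a (ρ b f) - ρ b (ρ a f))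
    (D : L →ₗ[ℝ] Module.End ℝ E) (hD : IsConn ρ D) (a b : L) : curv D a b ∈ ccCL C E := by
  apply ccCL_of
  intro f e
  have hD' : ∀ (a : L) (f : C) (e : E), D a (f • e) = f • D a e + ρ a f • e := hD
  simp only [curv, LinearMap.sub_apply, Module.End.mul_apply, hD', map_add, hρ, smul_sub, sub_smul]
  abel

theorem ccCL_wpow (R : (Fin 2 → L) → Module.End ℝ E) (hR : ∀ v, R v ∈ ccCL C E) (p : ℕ)
    (a : Fin (2 * p) → L) : wpow R p a ∈ ccCL C E := by
  induction p with
  | zero => exact ccCL_one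
  | succ p ih =>
    rw [wpow]
    exact ccCL_smul _ (ccCL_sum _ _ fun τ _ => ccCL_zsmul _ (ccCL_mul (hR _) (ih _)))

theorem ccCL_comm (ρ : L →ₗ[ℝ] Derivation ℝ C C)
    (D : L →ₗ[ℝ] Module.End ℝ E) (hD : IsConn ρ D) (a : L) {x : Module.End ℝ E}
    (hx : x ∈ ccCL C E) : D a * x - x * D a ∈ ccCL C E := by
  obtain ⟨g, rfl⟩ := hx
  have hD' : ∀ (a : L) (f : C) (e : E), D a (f • e) = f • D a e + ρ a f • e := hD
  apply ccCL_of
  intro f e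
  simp only [LinearMap.sub_apply, Module.End.mul_apply, LinearMap.coe_restrictScalars, map_smul,
    hD', map_add, smul_sub]
  abel

theorem trR_comm [Module.Finite C E] [Module.Free C E] (ρ : L →ₗ[ℝ] Derivation ℝ C C)
    (D : L →ₗ[ℝ] Module.End ℝ E) (hD : IsConn ρ D) (a : L) {x : Module.End ℝ E}
    (hx : x ∈ ccCL C E) : trR C (D a * x - x * D a) = ρ a (trR C x) := by
  classical
  have hD' : ∀ (a : L) (f : C) (e : E), D a (f • e) = f • D a e + ρ a f • e := hD
  obtain ⟨k, hk⟩ := ccCL_comm ρ D hD a hx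
  obtain ⟨g, rfl⟩ := hx
  let b := Module.Free.chooseBasis C E
  -- the `C`-linear part of the connection in the basis
  let A : E →ₗ[C] E := b.constr C (fun i => D a (b i))
  have hA : ∀ i, A (b i) = D a (b i) := fun i => b.constr_basis C _ i
  have hDa : ∀ e, D a e = A e + ∑ i, ρ a (b.repr e i) • b i := by
    intro e
    conv_lhs => rw [← b.sum_repr e]
    have hAe : A e = ∑ i, b.repr e i • D a (b i) := by
      conv_lhs => rw [← b.sum_repr e]
      simp only [map_sum, map_smul, hA]
    rw [hAe]
    simp only [map_sum, hD', Finset.sum_add_distrib]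
  let k' : E →ₗ[C] E := k - (A * g - g * A)
  have hk' : ∀ j, b.repr (k' (b j)) j = ρ a (b.repr (g (b j)) j) := by
    intro j
    have h1 : k (b j) = D a (g (b j)) - g (D a (b j)) :=
      (LinearMap.congr_fun hk (b j)).symm
    have h2 : k' (b j) = ∑ i, ρ a (b.repr (g (b j)) i) • b i := by
      simp only [k', LinearMap.sub_apply, Module.End.mul_apply, h1, hA]
      rw [hDa (g (b j))]; abel
    rw [h2, b.repr_sum_self]
  rw [hk, trR_restrict, trR_restrict]
  have h3 : k = k' + (A * g - g * A) := by simp [k']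
  rw [h3, map_add, map_sub _ (A * g), LinearMap.trace_mul_comm C A g, sub_self, add_zero,
    LinearMap.trace_eq_matrix_trace C b, LinearMap.trace_eq_matrix_trace C b]
  simp only [Matrix.trace, Matrix.diag, LinearMap.toMatrix_apply, hk', map_sum]

theorem dRho_trR [Module.Finite C E] [Module.Free C E] (ρ : L →ₗ[ℝ] Derivation ℝ C C)
    (D : L →ₗ[ℝ] Module.End ℝ E) (hD : IsConn ρ D) {n : ℕ} (ω : (Fin n → L) → Module.End ℝ E)
    (hω : ∀ a, ω a ∈ ccCL C E) (a : Fin (n + 1) → L) :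
    dRho ρ (fun a => trR C (ω a)) a = trR C (dEnd D ω a) := by
  cases n with
  | zero => simp only [dRho, dEnd, dGen, trR_comm ρ D hD _ (hω _)]
  | succ n =>
    simp only [dRho, dEnd, dGen]
    have h1 : ∀ (i j : Fin (n + 2)), (if h : (i : ℕ) < (j : ℕ) then
          (-1 : ℤ) ^ ((i : ℕ) + (j : ℕ)) • ω (Fin.cons ⁅a i, a j⁆
            (fun k : Fin n => a (j.succAbove
              ((⟨(i : ℕ), by have := j.isLt; omega⟩ : Fin (n + 1)).succAbove k))))
        else 0) ∈ ccCL C E := by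
      intro i j
      split_ifs
      · exact ccCL_zsmul _ (hω _)
      · exact ccCL_zero
    rw [trR_add (ccCL_sum _ _ fun i _ => ccCL_zsmul _ (ccCL_comm ρ D hD _ (hω _)))
      (ccCL_sum _ _ fun i _ => ccCL_sum _ _ fun j _ => h1 i j),
      trR_sum _ _ (fun i _ => ccCL_zsmul _ (ccCL_comm ρ D hD _ (hω _))),
      trR_sum _ _ (fun i _ => ccCL_sum _ _ fun j _ => h1 i j)]
    congr 1
    · refine Finset.sum_congr rfl fun i _ => ?_
      rw [trR_zsmul _ (ccCL_comm ρ D hD _ (hω _)), trR_comm ρ D hD _ (hω _)]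
    · refine Finset.sum_congr rfl fun i _ => ?_
      rw [trR_sum _ _ (fun j _ => h1 i j)]
      refine Finset.sum_congr rfl fun j _ => ?_
      split_ifs
      · rw [trR_zsmul _ (hω _)]
      · rw [trR_zero]

end ChernAux4

/-- the Chern character form `ch_p(∇)` is closed. -/
theorem stmt4 {L : Type*} {C : Type*} {E : Type*}
    [LieRing L] [LieAlgebra ℝ L] [CommRing C] [Algebra ℝ C] [Module C L]
    [AddCommGroup E] [Module ℝ E] [Module C E] [IsScalarTower ℝ C E]
    [Module.Finite C E] [Module.Free C E]
    (ρ : L →ₗ[ℝ] Derivation ℝ C C)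
    (hρ : ∀ (a b : L) (f : C), ρ ⁅a, b⁆ f = ρ a (ρ b f) - ρ b (ρ a f))
    (hLeib : ∀ (a b : L) (f : C), ⁅a, f • b⁆ = f • ⁅a, b⁆ + ρ a f • b)
    (D : L →ₗ[ℝ] Module.End ℝ E) (hD : IsConn ρ D) (p : ℕ) (hp : 1 ≤ p) :
    dRho ρ (chp C D p) = 0 := by
  funext a
  have h := dRho_trR ρ D hD (wpow (curv2 D) p)
    (ccCL_wpow _ (fun v => ccCL_curv ρ hρ D hD _ _) p) a
  rw [dEnd_wpow] at h
  exact h.trans trR_zero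
end

section
/- For any two ℝ-linear connections ∇⁰, ∇¹ of L on E and every p ≥ 1: d_ρ(cs_p(∇⁰,∇¹)) = ch_p(∇¹) − ch_p(∇⁰) (the Chern–Simons transgression formula for a pair of ℝ-linear connections). -/
open Module

/-- List-indexed cochains. -/
def LF (L B : Type*) := List L → B

namespace LF
variable {L B V : Type*}

instance [AddCommGroup B] : AddCommGroup (LF L B) := inferInstanceAs (AddCommGroup (List L → B))

@[ext] theorem ext {f g : LF L B} (h : ∀ l, f l = g l) : f = g := funext h

section grp
variable [AddCommGroup B]
@[simp] theorem add_apply (f g : LF L B) (l) : (f + g) l = f l + g l := rfl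
@[simp] theorem sub_apply (f g : LF L B) (l) : (f - g) l = f l - g l := rfl
@[simp] theorem neg_apply (f : LF L B) (l) : (-f) l = - f l := rfl
@[simp] theorem zero_apply (l) : (0 : LF L B) l = 0 := rfl

/-- contraction -/
def io (a : L) (f : LF L B) : LF L B := fun l => f (a :: l)
/-- grading involution -/
def sg (f : LF L B) : LF L B := fun l => (-1 : ℤ) ^ l.length • f l

@[simp] theorem io_apply (a : L) (f : LF L B) (l) : io a f l = f (a :: l) := rfl
theorem io_add (a : L) (f g : LF L B) : io a (f + g) = io a f + io a g := rfl
theorem io_sub (a : L) (f g : LF L B) : io a (f - g) = io a f - io a g := rfl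
theorem io_neg (a : L) (f : LF L B) : io a (-f) = -io a f := rfl
theorem io_zero (a : L) : io a (0 : LF L B) = 0 := rfl
theorem sg_apply (f : LF L B) (l) : sg f l = (-1 : ℤ) ^ l.length • f l := rfl
theorem sg_add (f g : LF L B) : sg (f + g) = sg f + sg g := by ext l; simp [sg_apply]
theorem sg_sub (f g : LF L B) : sg (f - g) = sg f - sg g := by ext l; simp [sg_apply, smul_sub]
theorem sg_neg (f : LF L B) : sg (-f) = -sg f := by ext l; simp [sg_apply]
theorem sg_zero : sg (0 : LF L B) = 0 := by ext l; simp [sg_apply]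
theorem io_sg (a : L) (f : LF L B) : io a (sg f) = - sg (io a f) := by
  ext l; simp [sg_apply, pow_succ]
theorem sg_sg (f : LF L B) : sg (sg f) = f := by
  ext l; simp [sg_apply, smul_smul, ← mul_pow]
end grp

section ring
variable [Ring B]

/-- shuffle product, pointwise -/
def sh : List L → LF L B → LF L B → B
  | [], f, g => f [] * g []
  | a :: l, f, g => sh l (io a f) g + sh l (sg f) (io a g)

instance : Mul (LF L B) := ⟨fun f g l => sh l f g⟩
instance : One (LF L B) := ⟨fun l => match l with | [] => 1 | _ :: _ => 0⟩

theorem mul_nil (f g : LF L B) : (f * g) [] = f [] * g [] := rfl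
theorem io_mul (a : L) (f g : LF L B) : io a (f * g) = io a f * g + sg f * io a g := rfl
theorem mul_cons (f g : LF L B) (a : L) (l) :
   (f * g) (a :: l) = (io a f * g) l + (sg f * io a g) l := rfl
theorem one_nil : (1 : LF L B) [] = 1 := rfl
theorem io_one (a : L) : io a (1 : LF L B) = 0 := rfl
theorem sg_one : sg (1 : LF L B) = 1 := by
  ext l; cases l with
  | nil => simp [sg_apply]
  | cons a l =>
    have : (1 : LF L B) (a :: l) = 0 := rfl
    simp [sg_apply, this]

theorem mul_ap_zero (l : List L) : ∀ (f : LF L B), (f * 0) l = 0 := by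
  induction l with
  | nil => intro f; simp [mul_nil]
  | cons a l ih => intro f; simp [mul_cons, ih, io_zero]
theorem zero_ap_mul (l : List L) : ∀ (f : LF L B), (0 * f) l = 0 := by
  induction l with
  | nil => intro f; simp [mul_nil]
  | cons a l ih => intro f; simp [mul_cons, ih, io_zero, sg_zero]
theorem add_ap_mul (l : List L) : ∀ (f g h : LF L B), ((f + g) * h) l = (f * h) l + (g * h) l := by
  induction l with
  | nil => intro f g h; simp [mul_nil, add_mul]
  | cons a l ih => intro f g h; simp only [mul_cons, ih, io_add, sg_add]; abel
theorem mul_ap_add (l : List L) : ∀ (f g h : LF L B), (f * (g + h)) l = (f * g) l + (f * h) l := by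
  induction l with
  | nil => intro f g h; simp [mul_nil, mul_add]
  | cons a l ih => intro f g h; simp only [mul_cons, ih, io_add]; abel
theorem one_ap_mul (l : List L) : ∀ (f : LF L B), (1 * f) l = f l := by
  induction l with
  | nil => intro f; simp [mul_nil, one_nil]
  | cons a l ih => intro f; simp [mul_cons, ih, io_one, sg_one, zero_ap_mul]
theorem mul_ap_one (l : List L) : ∀ (f : LF L B), (f * 1) l = f l := by
  induction l with
  | nil => intro f; simp [mul_nil, one_nil]
  | cons a l ih => intro f; simp [mul_cons, ih, io_one, mul_ap_zero]

instance : NonAssocRing (LF L B) :=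
  { (inferInstance : AddCommGroup (LF L B)) with
    mul_zero := fun f => ext fun l => mul_ap_zero l f
    zero_mul := fun f => ext fun l => zero_ap_mul l f
    left_distrib := fun f g h => ext fun l => mul_ap_add l f g h
    right_distrib := fun f g h => ext fun l => add_ap_mul l f g h
    one_mul := fun f => ext fun l => one_ap_mul l f
    mul_one := fun f => ext fun l => mul_ap_one l f }

theorem sg_ap_mul (l : List L) : ∀ (f g : LF L B), sg (f * g) l = (sg f * sg g) l := by
  induction l with
  | nil => intro f g; simp [mul_nil, sg_apply]
  | cons a l ih =>
    intro f g
    have : sg (f * g) (a :: l) = io a (sg (f * g)) l := rfl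
    rw [this, io_sg, io_mul, sg_add, mul_cons, io_sg, io_sg, sg_sg]
    simp only [neg_apply, add_apply, ih, sg_sg, neg_mul, mul_neg]
    abel
theorem sg_mul (f g : LF L B) : sg (f * g) = sg f * sg g := ext fun l => sg_ap_mul l f g

theorem ap_assoc (l : List L) : ∀ (f g h : LF L B), (f * g * h) l = (f * (g * h)) l := by
  induction l with
  | nil => intro f g h; simp [mul_nil, mul_assoc]
  | cons a l ih =>
    intro f g h
    rw [mul_cons, mul_cons]
    simp only [io_mul, sg_mul, add_mul, mul_add, add_apply, ih]
    abel

instance : Ring (LF L B) :=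
  { (inferInstance : NonAssocRing (LF L B)) with
    mul_assoc := fun f g h => ext fun l => ap_assoc l f g h }

theorem sg_pow {f : LF L B} (h : sg f = f) (n : ℕ) : sg (f ^ n) = f ^ n := by
  induction n with
  | zero => simp [sg_one]
  | succ n ih => rw [pow_succ, sg_mul, ih, h]
end ring

section d
variable [LieRing L] [AddCommGroup V]
/-- Lie derivative -/
def lieAux (δ : L → V →+ V) (a : L) : List L → LF L V → V
  | [], f => δ a (f [])
  | b :: l, f => lieAux δ a l (io b f) - f (⁅a, b⁆ :: l)
/-- Lie derivative -/
def lie (δ : L → V →+ V) (a : L) (f : LF L V) : LF L V := fun l => lieAux δ a l f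
/-- differential -/
def dAux (δ : L → V →+ V) : List L → LF L V → V
  | [], _ => 0
  | a :: l, f => lie δ a f l - dAux δ l (io a f)
/-- differential -/
def d (δ : L → V →+ V) (f : LF L V) : LF L V := fun l => dAux δ l f

variable (δ : L → V →+ V)
theorem lie_nil (a : L) (f : LF L V) : lie δ a f [] = δ a (f []) := rfl
theorem io_lie (a b : L) (f : LF L V) : io b (lie δ a f) = lie δ a (io b f) - io ⁅a, b⁆ f := rfl
theorem lie_cons (a b : L) (f : LF L V) (l) :
  lie δ a f (b :: l) = lie δ a (io b f) l - f (⁅a, b⁆ :: l) := rfl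
theorem d_nil (f : LF L V) : d δ f [] = 0 := rfl
theorem io_d (a : L) (f : LF L V) : io a (d δ f) = lie δ a f - d δ (io a f) := rfl
theorem d_cons (a : L) (f : LF L V) (l) :
  d δ f (a :: l) = lie δ a f l - d δ (io a f) l := rfl

theorem lie_ap_add (a : L) (l : List L) : ∀ f g : LF L V,
    lie δ a (f + g) l = lie δ a f l + lie δ a g l := by
  induction l with
  | nil => intro f g; simp [lie_nil]
  | cons b l ih => intro f g; simp only [lie_cons, io_add, ih, add_apply]; abel
theorem lie_add (a : L) (f g : LF L V) : lie δ a (f + g) = lie δ a f + lie δ a g :=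
  ext fun l => lie_ap_add δ a l f g
theorem d_ap_add (l : List L) : ∀ f g : LF L V, d δ (f + g) l = d δ f l + d δ g l := by
  induction l with
  | nil => intro f g; simp [d_nil]
  | cons b l ih => intro f g; simp only [d_cons, io_add, ih, lie_add, add_apply]; abel
theorem d_add (f g : LF L V) : d δ (f + g) = d δ f + d δ g := ext fun l => d_ap_add δ l f g
/-- additive version -/
def dHom : LF L V →+ LF L V := AddMonoidHom.mk' (d δ) (d_add δ)
/-- additive version -/
def lieHom (a : L) : LF L V →+ LF L V := AddMonoidHom.mk' (lie δ a) (lie_add δ a)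
theorem d_neg (f : LF L V) : d δ (-f) = -d δ f := (dHom δ).map_neg f
theorem d_zero : d δ (0 : LF L V) = 0 := (dHom δ).map_zero
theorem lie_neg (a : L) (f : LF L V) : lie δ a (-f) = -lie δ a f := (lieHom δ a).map_neg f
theorem lie_zero (a : L) : lie δ a (0 : LF L V) = 0 := (lieHom δ a).map_zero

theorem lie_ap_sg (a : L) (l : List L) : ∀ f : LF L V, lie δ a (sg f) l = sg (lie δ a f) l := by
  induction l with
  | nil => intro f; simp [lie_nil, sg_apply]
  | cons b l ih =>
    intro f
    have : sg (lie δ a f) (b :: l) = io b (sg (lie δ a f)) l := rfl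
    have h2 : sg f (⁅a, b⁆ :: l) = io ⁅a, b⁆ (sg f) l := rfl
    rw [this, io_sg, io_lie, lie_cons, h2, io_sg, io_sg, lie_neg, neg_apply, ih, sg_sub]
    simp
    abel
theorem lie_sg (a : L) (f : LF L V) : lie δ a (sg f) = sg (lie δ a f) :=
  ext fun l => lie_ap_sg δ a l f
theorem d_ap_sg (l : List L) : ∀ f : LF L V, d δ (sg f) l = - sg (d δ f) l := by
  induction l with
  | nil => intro f; simp [d_nil, sg_apply]
  | cons b l ih =>
    intro f
    have : sg (d δ f) (b :: l) = io b (sg (d δ f)) l := rfl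
    rw [this, io_sg, io_d, d_cons, io_sg, d_neg, neg_apply, ih, sg_sub, lie_sg]
    simp
theorem d_sg (f : LF L V) : d δ (sg f) = - sg (d δ f) :=
  ext fun l => d_ap_sg δ l f
end d

section leib
variable [LieRing L] [Ring B] (δ : L → B →+ B)
theorem lie_ap_mul (hδ : ∀ a x y, δ a (x * y) = δ a x * y + x * δ a y)
    (a : L) (l : List L) : ∀ f g : LF L B,
    lie δ a (f * g) l = (lie δ a f * g + f * lie δ a g) l := by
  induction l with
  | nil => intro f g; simp [lie_nil, mul_nil, hδ]
  | cons b l ih =>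
    intro f g
    rw [lie_cons, io_mul, lie_add, add_apply, ih, ih, mul_cons, add_apply (lie δ a f * g), mul_cons, mul_cons,
      io_lie, io_lie, lie_sg]
    simp only [sub_mul, mul_sub, add_apply, sub_apply]
    abel
theorem lie_mul (hδ : ∀ a x y, δ a (x * y) = δ a x * y + x * δ a y)
    (a : L) (f g : LF L B) :
    lie δ a (f * g) = lie δ a f * g + f * lie δ a g := ext fun l => lie_ap_mul δ hδ a l f g
theorem d_ap_mul (hδ : ∀ a x y, δ a (x * y) = δ a x * y + x * δ a y)
    (l : List L) : ∀ f g : LF L B,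
    d δ (f * g) l = (d δ f * g + sg f * d δ g) l := by
  induction l with
  | nil => intro f g; simp [d_nil, mul_nil]
  | cons b l ih =>
    intro f g
    rw [d_cons, io_mul, d_add, add_apply, ih, ih, add_apply (d δ f * g), mul_cons, mul_cons, lie_mul δ hδ,
      io_d, io_d, io_sg, sg_sg, d_sg]
    simp only [sub_mul, mul_sub, neg_mul, neg_apply, add_apply, sub_apply]
    abel
theorem d_mul (hδ : ∀ a x y, δ a (x * y) = δ a x * y + x * δ a y)
    (f g : LF L B) :
    d δ (f * g) = d δ f * g + sg f * d δ g := ext fun l => d_ap_mul δ hδ l f g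
theorem d_one (hδ : ∀ a x y, δ a (x * y) = δ a x * y + x * δ a y)
    : d δ (1 : LF L B) = 0 := by
  have h1 : ∀ a, δ a 1 = 0 := fun a => by simpa using hδ a 1 1
  have hl : ∀ a, lie δ a (1 : LF L B) = 0 := by
    intro a; ext l
    cases l with
    | nil => simp [lie_nil, one_nil, h1]
    | cons b l => 
      have : (1 : LF L B) (⁅a, b⁆ :: l) = 0 := rfl
      rw [lie_cons, io_one, lie_zero, this]; simp
  ext l
  cases l with
  | nil => rfl
  | cons a l => rw [d_cons, hl, io_one, d_zero]; simp
theorem d_pow (hδ : ∀ a x y, δ a (x * y) = δ a x * y + x * δ a y)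
    {f : LF L B} (hf : d δ f = 0) (n : ℕ) : d δ (f ^ n) = 0 := by
  induction n with
  | zero => simpa using d_one δ hδ
  | succ n ih => rw [pow_succ, d_mul δ hδ, ih, hf]; simp
end leib

section tr
variable [Ring B] [AddCommGroup V] (T : B →+ V)
theorem tr_aux (hT : ∀ x y, T (x * y) = T (y * x))
    (l : List L) : (∀ f g : LF L B, sg f = f → T ((f * g) l) = T ((g * f) l)) ∧
    (∀ f g : LF L B, sg f = -f → T ((f * g) l) = T ((sg g * f) l)) := by
  induction l with
  | nil => constructor <;> intro f g _ <;> simp [mul_nil, sg_apply, hT (f []) (g [])]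
  | cons a l ih =>
    constructor
    · intro f g h
      have h' : sg (io a f) = - io a f := by rw [← neg_eq_iff_eq_neg, ← io_sg, h]
      rw [mul_cons, mul_cons, map_add, map_add, ih.2 _ _ h', h, ih.1 _ _ h, add_comm]
    · intro f g h
      have h' : sg (io a f) = io a f := by rw [← neg_inj, ← io_sg, h, io_neg]
      rw [mul_cons, mul_cons, map_add, map_add, ih.1 _ _ h', h, sg_sg, io_sg, neg_mul, neg_mul,
        neg_apply, neg_apply, map_neg, map_neg, ih.2 _ _ h, add_comm]
end tr

section trd
variable {W : Type*} [LieRing L] [AddCommGroup W] [AddCommGroup V] (T : W →+ V)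
  (δ : L → W →+ W) (δ' : L → V →+ V)
/-- push forward of values -/
def mp {W V : Type*} (T : W → V) (f : LF L W) : LF L V := fun l => T (f l)
theorem lie_mp (h : ∀ a x, T (δ a x) = δ' a (T x))
    (a : L) (l : List L) : ∀ f : LF L W, lie δ' a (mp T f) l = T (lie δ a f l) := by
  induction l with
  | nil => intro f; simp [lie_nil, h, mp]
  | cons b l ih => 
    intro f
    have : io b (mp T f) = mp T (io b f) := rfl
    rw [lie_cons, this, ih, lie_cons, map_sub]; rfl
theorem d_mp (h : ∀ a x, T (δ a x) = δ' a (T x))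
    (l : List L) : ∀ f : LF L W, d δ' (mp T f) l = T (d δ f l) := by
  induction l with
  | nil => intro f; simp [d_nil]
  | cons b l ih => 
    intro f
    have : io b (mp T f) = mp T (io b f) := rfl
    rw [d_cons, this, ih, lie_mp T δ δ' h, d_cons, map_sub]
end trd

section mpm
variable {B' : Type*} [Ring B] [Ring B'] (r : B →+* B')
theorem mp_mul_ap (l : List L) : ∀ f g : LF L B, (mp r f * mp r g) l = r ((f * g) l) := by
  induction l with
  | nil => intro f g; simp [mul_nil, mp]
  | cons a l ih =>
    intro f g
    have h1 : io a (mp r f) = mp r (io a f) := rfl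
    have h2 : io a (mp r g) = mp r (io a g) := rfl
    have h3 : sg (mp r f) = mp r (sg f) := by ext l; simp [mp, sg_apply]
    rw [mul_cons, h1, h2, h3, ih, ih, mul_cons, map_add]
theorem mp_pow (f : LF L B) (n : ℕ) : mp r f ^ n = mp r (f ^ n) := by
  induction n with
  | zero =>
    ext l; cases l with
    | nil => exact (map_one r).symm
    | cons a l => exact (map_zero r).symm
  | succ n ih => ext l; rw [pow_succ, ih, mp_mul_ap, pow_succ]; rfl
end mpm

/-! alternation -/
section alt
variable [AddCommGroup V]
/-- alternating (skew-symmetric) -/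
def Alt (f : LF L V) : Prop := ∀ u a b v, f (u ++ a :: b :: v) = - f (u ++ b :: a :: v)
/-- supported in degree n -/
def Sup (n : ℕ) (f : LF L V) : Prop := ∀ l, l.length ≠ n → f l = 0
theorem Alt.io {f : LF L V} (h : Alt f) (a : L) : Alt (io a f) :=
  fun u b c v => h (a :: u) b c v
theorem Alt.sg {f : LF L V} (h : Alt f) : Alt (sg f) := by
  intro u b c v
  rw [sg_apply, sg_apply, h]; simp
theorem Alt.swap {f : LF L V} (h : Alt f) (a b : L) :
    LF.io a (LF.io b f) = - LF.io b (LF.io a f) := by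
  ext l; exact h [] b a l
theorem Sup.io {n} {f : LF L V} (h : Sup (n+1) f) (a : L) : Sup n (io a f) :=
  fun l hl => h (a :: l) (by simpa using hl)
theorem Sup.io0 {f : LF L V} (h : Sup 0 f) (a : L) : LF.io a f = 0 :=
  ext fun l => h (a :: l) (by simp)
theorem Sup.sg {n} {f : LF L V} (h : Sup n f) : Sup n (sg f) :=
  fun l hl => by simp [sg_apply, h l hl]

theorem alt_mul_ap [Ring B] (a b : L) (v : List L) (u : List L) : ∀ f g : LF L B, Alt f → Alt g →
    (f * g) (u ++ a :: b :: v) = - (f * g) (u ++ b :: a :: v) := by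
  induction u with
  | nil =>
    intro f g hf hg
    simp only [List.nil_append, mul_cons, io_mul, io_sg, sg_sg, hf.swap a b, hg.swap a b,
      neg_mul, mul_neg, neg_apply]
    abel
  | cons c u ih =>
    intro f g hf hg
    rw [List.cons_append, List.cons_append, mul_cons, mul_cons, ih _ _ (hf.io c) hg,
      ih _ _ hf.sg (hg.io c), neg_add]
theorem Alt.mul [Ring B] {f g : LF L B} (hf : Alt f) (hg : Alt g) : Alt (f * g) :=
  fun u a b v => alt_mul_ap a b v u f g hf hg
theorem Alt.one [Ring B] : Alt (1 : LF L B) := by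
  intro u a b v
  cases u <;> exact neg_zero.symm
theorem Alt.pow [Ring B] {f : LF L B} (hf : Alt f) (n : ℕ) : Alt (f ^ n) := by
  induction n with
  | zero => simpa using Alt.one
  | succ n ih => rw [pow_succ]; exact ih.mul hf

/-- alternating sum over deletions -/
def th : List L → (L → LF L V) → V
  | [], _ => 0
  | a :: l, Ω => Ω a l - th l (fun b => io a (Ω b))
theorem th_cons (a : L) (l) (Ω : L → LF L V) :
  th (a :: l) Ω = Ω a l - th l (fun b => io a (Ω b)) := rfl
theorem th_add (l : List L) : ∀ (Ω Ω' : L → LF L V), 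
    th l (fun b => Ω b + Ω' b) = th l Ω + th l Ω' := by
  induction l with
  | nil => intro Ω Ω'; simp [th]
  | cons a l ih => intro Ω Ω'; simp only [th_cons, io_add, ih, add_apply]; abel
theorem th_neg (l : List L) : ∀ (Ω : L → LF L V), 
    th l (fun b => - Ω b) = - th l Ω := by
  induction l with
  | nil => intro Ω; simp [th]
  | cons a l ih => intro Ω; simp only [th_cons, io_neg, ih, neg_apply]; abel
theorem th_zero (l : List L) : th l (fun _ => (0 : LF L V)) = 0 := by
  induction l with
  | nil => rfl
  | cons a l ih => simp only [th_cons, io_zero, ih]; simp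

theorem th_io (l : List L) : ∀ f : LF L V, Alt f → th l (fun b => io b f) = l.length • f l := by
  induction l with
  | nil => intro f _; simp [th]
  | cons a l ih =>
    intro f hf
    simp only [th_cons, hf.swap a]
    rw [th_neg, ih _ (hf.io a)]
    simp [add_smul]; abel

theorem th_mul [Ring B] (l : List L) : ∀ (m : ℕ) (f g : LF L B), Alt f → Sup m f →
    th l (fun b => io b f * g) = m • (f * g) l := by
  induction l with
  | nil =>
    intro m f g _ hs
    cases m with
    | zero => simp [th]
    | succ m => simp [th, mul_nil, hs [] (by simp)]
  | cons a l ih =>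
    intro m f g hf hs
    simp only [th_cons, io_mul]
    rw [th_add]
    have e1 : th l (fun b => io a (io b f) * g) = - th l (fun b => io b (io a f) * g) := by
      rw [← th_neg]; simp only [hf.swap a, neg_mul]
    have e2 : th l (fun b => sg (io b f) * io a g) = - th l (fun b => io b (sg f) * io a g) := by
      rw [← th_neg]; simp only [io_sg, neg_mul, neg_neg]
    rw [e1, e2, ih m _ _ hf.sg hs.sg, mul_cons]
    cases m with
    | zero => 
      rw [hs.io0]
      simp [io_zero, th_zero]
    | succ m =>
      rw [ih m _ _ (hf.io a) (hs.io a)]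
      simp only [add_smul, smul_add, one_smul]; abel

/-- full antisymmetrization -/
def al : ℕ → LF L V → LF L V
  | 0, f => f
  | n + 1, f => fun l => th l (fun b => al n (io b f))

theorem th_smul (l : List L) (n : ℕ) : ∀ (Ω : L → LF L V), 
    th l (fun b => n • Ω b) = n • th l Ω := by
  intro Ω
  induction n with
  | zero => simpa using th_zero l
  | succ n ih => simp only [add_smul, one_smul]; rw [th_add, ih]

theorem th_congr (l : List L) : ∀ (Ω Ω' : L → LF L V), 
    (∀ b l', l'.length + 1 = l.length → Ω b l' = Ω' b l') → th l Ω = th l Ω' := by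
  induction l with
  | nil => intro _ _ _; rfl
  | cons a l ih => 
    intro Ω Ω' h
    rw [th_cons, th_cons, h a l (by simp), ih]
    intro b l' h'
    exact h b (a :: l') (by simp [h'])

theorem al_alt (n : ℕ) : ∀ (f : LF L V) (l : List L), Alt f → l.length = n → 
    al n f l = n.factorial • f l := by
  induction n with
  | zero => intro f l _ _; simp [al]
  | succ n ih =>
    intro f l hf hl
    show th l _ = _
    rw [th_congr l _ (fun b => n.factorial • io b f), th_smul, th_io l f hf, hl, smul_smul,
      Nat.factorial_succ, mul_comm]
    intro b l' h'
    rw [ih _ _ (hf.io b) (by omega)]; rfl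

/-- concatenation product -/
def cc [Ring B] (m : ℕ) (f g : LF L B) : LF L B := fun l => f (l.take m) * g (l.drop m)

theorem al_cmul [Ring B] (n : ℕ) (c : B) : ∀ (g : LF L B) (l : List L), 
    al n (fun l => c * g l) l = c * al n g l := by
  have key : ∀ (l : List L) (Ω : L → LF L B), th l (fun b => (fun l' => c * Ω b l' : LF L B)) = 
      c * th l Ω := by
    intro l
    induction l with
    | nil => intro Ω; simp [th]
    | cons a l ih => intro Ω; rw [th_cons a l Ω, mul_sub, ← ih]; rfl
  induction n with
  | zero => intro g l; rfl
  | succ n ih =>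
    intro g l
    show th l _ = c * th l _
    rw [← key]
    apply th_congr
    intro b l' _
    exact ih _ _

theorem sup0_mul [Ring B] (l : List L) : ∀ (f g : LF L B), Sup 0 f → (f * g) l = f [] * g l := by
  induction l with
  | nil => intro f g _; rfl
  | cons a l ih => 
    intro f g h
    rw [mul_cons, h.io0, ih _ _ h.sg]
    simp [sg_apply]

theorem al_cc [Ring B] (n m : ℕ) : ∀ (f g : LF L B) (l : List L), Alt f → Sup m f → Alt g →
    l.length = m + n → al (m + n) (cc m f g) l = (m.factorial * n.factorial) • (f * g) l := by
  induction m with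
  | zero =>
    intro f g l hf hs hg hl
    rw [sup0_mul l f g hs]
    have : cc 0 f g = fun l => f [] * g l := by ext l; simp [cc]
    rw [this, al_cmul, al_alt _ _ _ hg hl]
    simp [(Nat.cast_commute n.factorial (f [])).left_comm]
  | succ m ih =>
    intro f g l hf hs hg hl
    rw [show m + 1 + n = (m + n) + 1 by omega]
    show th l _ = _
    rw [th_congr l _ (fun b => (m.factorial * n.factorial) • (io b f * g)), th_smul,
      th_mul l (m+1) f g hf hs, smul_smul, Nat.factorial_succ]
    · congr 1; ring
    · intro b l' h'
      have : io b (cc (m+1) f g) = cc m (io b f) g := by ext l; simp [cc]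
      rw [this, ih _ _ _ (hf.io b) (hs.io b) hg (by omega)]; rfl
end alt

/-! bridge from Fin sums -/
section fin
variable [AddCommGroup V]
theorem th_ofFn (n : ℕ) : ∀ (a : Fin (n+1) → L) (Ω : L → LF L V),
   ∑ i : Fin (n+1), (-1 : ℤ) ^ (i : ℕ) • Ω (a i) (List.ofFn fun k => a (i.succAbove k)) =
    th (List.ofFn a) Ω := by
  induction n with
  | zero => intro a Ω; simp [th]
  | succ n ih =>
    intro a Ω
    rw [Fin.sum_univ_succ, List.ofFn_succ (f := a), th_cons, ← ih]
    simp [pow_succ, sub_eq_add_neg, List.ofFn_succ]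

theorem perm_sum {n : ℕ} (F : Equiv.Perm (Fin (n+1)) → V) :
    ∑ τ, F τ = ∑ k : Fin (n+1), ∑ τ' : Equiv.Perm (Fin n),
      F (k.cycleRange.symm * Equiv.Perm.decomposeFin.symm (0, τ')) := by
  rw [← Fintype.sum_prod_type']
  symm
  apply Fintype.sum_bijective (fun x : Fin (n+1) × Equiv.Perm (Fin n) => 
    x.1.cycleRange.symm * Equiv.Perm.decomposeFin.symm (0, x.2))
  · rw [Fintype.bijective_iff_injective_and_card]
    constructor
    · rintro ⟨k, τ⟩ ⟨k', τ'⟩ h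
      have h0 := congrArg (fun e : Equiv.Perm (Fin (n+1)) => e 0) h
      simp at h0
      subst h0
      simpa using h
    · simp [Fintype.card_perm, Nat.factorial_succ]
  · intro x; rfl

theorem al_ofFn (n : ℕ) : ∀ (a : Fin n → L) (f : LF L V),
    ∑ τ : Equiv.Perm (Fin n), (Equiv.Perm.sign τ : ℤ) • f (List.ofFn fun i => a (τ i)) =
      al n f (List.ofFn a) := by
  induction n with
  | zero => intro a f; simp [al]
  | succ n ih =>
    intro a f
    rw [perm_sum]
    show _ = th _ _
    rw [← th_ofFn]
    apply Finset.sum_congr rfl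
    intro k _
    rw [← ih, Finset.smul_sum]
    apply Finset.sum_congr rfl
    intro τ _
    simp [List.ofFn_succ, smul_smul, Fin.sign_cycleRange]

variable [LieRing L]
/-- bracket part -/
def qq : List L → LF L V → V
  | [], _ => 0
  | a :: l, f => - th l (fun b => io ⁅a, b⁆ f) - qq l (io a f)

theorem q_ofFn (m : ℕ) : ∀ (a : Fin (m+2) → L) (f : LF L V), Alt f →
   (∑ i : Fin (m + 2), ∑ j : Fin (m + 2),
        if h : (i : ℕ) < (j : ℕ) then
          (-1 : ℤ) ^ ((i : ℕ) + (j : ℕ)) • f (List.ofFn (Fin.cons ⁅a i, a j⁆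
            (fun k : Fin m => a (j.succAbove
              ((⟨(i : ℕ), by have := j.isLt; omega⟩ : Fin (m + 1)).succAbove k))) : Fin (m+1) → L))
        else 0) = qq (List.ofFn a) f := by
  induction m with
  | zero =>
    intro a f hf
    simp [qq, th, Fin.sum_univ_succ]
  | succ m ih =>
    intro a f hf
    rw [Fin.sum_univ_succ, List.ofFn_succ (f := a), qq, sub_eq_add_neg]
    congr 1
    · rw [Fin.sum_univ_succ, ← th_ofFn]
      simp [pow_succ, List.ofFn_succ]
    · rw [← ih _ _ (hf.io _), ← Finset.sum_neg_distrib]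
      apply Finset.sum_congr rfl
      intro i _
      rw [Fin.sum_univ_succ, ← Finset.sum_neg_distrib]
      rw [dif_neg (by simp), zero_add]
      apply Finset.sum_congr rfl
      intro j _
      by_cases h : (i : ℕ) < j
      · have h2 : ((i.succ : Fin _) : ℕ) < (j.succ : Fin _) := by simpa using h
        rw [dif_pos h, dif_pos h2]
        have hh : (⟨((i.succ : Fin (m+1+2)) : ℕ), by have := j.isLt; simp; omega⟩ : Fin (m+1+1)) = 
          Fin.succ ⟨(i : ℕ), by have := j.isLt; omega⟩ := rfl
        simp only [hh]
        rw [List.ofFn_succ, List.ofFn_succ (n := m), List.ofFn_succ (n := m)]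
        simp only [Fin.cons_zero, Fin.cons_succ, Fin.succ_succAbove_zero, Fin.succ_succAbove_succ, io_apply]
        have := hf [] ⁅a i.succ, a j.succ⁆ (a 0) 
        simp only [List.nil_append] at this
        rw [this]
        simp [pow_succ, pow_add]
      · have h2 : ¬ ((i.succ : Fin _) : ℕ) < (j.succ : Fin _) := by simpa using h
        rw [dif_neg h, dif_neg h2, neg_zero]

variable (δ : L → V →+ V)
theorem lie_alt (a : L) (l : List L) : ∀ f : LF L V, Alt f →
    lie δ a f l = δ a (f l) - th l (fun b => io ⁅a, b⁆ f) := by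
  induction l with
  | nil => intro f _; simp [lie_nil, th]
  | cons b l ih =>
    intro f hf
    rw [lie_cons, ih _ (hf.io b), th_cons]
    simp only [hf.swap b]
    rw [th_neg]
    simp only [io_apply]
    abel
theorem d_alt (l : List L) : ∀ f : LF L V, Alt f →
    d δ f l = th l (fun b => mp (δ b) f) + qq l f := by
  induction l with
  | nil => intro f _; simp [d_nil, th, qq]
  | cons b l ih =>
    intro f hf
    rw [d_cons, ih _ (hf.io b), lie_alt _ _ _ _ hf, th_cons, qq]
    have : th l (fun c => io b (mp (δ c) f)) = th l (fun c => mp (δ c) (io b f)) := rfl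
    rw [this]
    simp only [mp, io_apply]
    abel
end fin
end LF

section poly
variable {V W : Type*} [AddCommGroup V] [Module ℝ V] [AddCommGroup W] [Module ℝ W]
/-- polynomial functions with their derivatives -/
inductive PD : (ℝ → V) → (ℝ → V) → Prop
  | mono (k : ℕ) (v : V) : PD (fun t => t ^ (k + 1) • v) (fun t => (((k : ℝ) + 1) * t ^ k) • v)
  | const (v : V) : PD (fun _ => v) (fun _ => 0)
  | add {f f' g g' : ℝ → V} : PD f f' → PD g g' → PD (fun t => f t + g t) (fun t => f' t + g' t)

theorem PD.congr {f f' g g' : ℝ → V} (h : PD f f') (h1 : ∀ t, g t = f t) (h2 : ∀ t, g' t = f' t) :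
    PD g g' := by
  rw [funext h1, funext h2]; exact h

theorem PD.map (φ : V →ₗ[ℝ] W) {f f' : ℝ → V} (h : PD f f') :
    PD (fun t => φ (f t)) (fun t => φ (f' t)) := by
  induction h with
  | mono k v => exact (PD.mono k (φ v)).congr (fun t => by simp) (fun t => by simp only [map_smul])
  | const v => exact (PD.const (φ v)).congr (fun t => rfl) (fun t => by simp)
  | add _ _ h1 h2 => exact (h1.add h2).congr (fun t => by simp) (fun t => by simp)

theorem PD.sub {f f' g g' : ℝ → V} (h : PD f f') (h1 : PD g g') :
    PD (fun t => f t - g t) (fun t => f' t - g' t) :=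
  (h.add (h1.map (-LinearMap.id))).congr (fun t => by simp [sub_eq_add_neg])
    (fun t => by simp [sub_eq_add_neg])

theorem PD.anti {f f' : ℝ → V} (h : PD f f') : ∃ F, PD F f := by
  induction h with
  | mono k v =>
    refine ⟨_, (PD.mono (k+1) (((k : ℝ) + 1 + 1)⁻¹ • v)).congr (fun t => rfl) (fun t => ?_)⟩
    have : (k : ℝ) + 1 + 1 ≠ 0 := by positivity
    rw [smul_smul]; congr 1; push_cast; field_simp
  | const v => exact ⟨_, (PD.mono 0 v).congr (fun t => rfl) (fun t => by simp)⟩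
  | add _ _ h1 h2 =>
    obtain ⟨F, hF⟩ := h1
    obtain ⟨G, hG⟩ := h2
    exact ⟨_, hF.add hG⟩

theorem PD.mul {A : Type*} [Ring A] [Algebra ℝ A] {f f' g g' : ℝ → A} (hf : PD f f')
    (hg : PD g g') : PD (fun t => f t * g t) (fun t => f' t * g t + f t * g' t) := by
  induction hf with
  | const v =>
    exact (hg.map (LinearMap.mulLeft ℝ v)).congr (fun t => by simp) (fun t => by simp)
  | add _ _ h1 h2 =>
    exact (h1.add h2).congr (fun t => by simp [add_mul])
      (fun t => by simp only [add_mul]; abel)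
  | mono k v =>
    induction hg with
    | const w =>
      exact (PD.mono k (v * w)).congr (fun t => by simp) (fun t => by simp)
    | add _ _ h1 h2 =>
      exact (h1.add h2).congr (fun t => by simp [mul_add])
        (fun t => by simp only [mul_add]; abel)
    | mono j w =>
      refine (PD.mono (k + j + 1) (v * w)).congr (fun t => ?_) (fun t => ?_)
      · rw [smul_mul_smul_comm]; congr 1; ring
      · rw [smul_mul_smul_comm, smul_mul_smul_comm, ← add_smul]; congr 1; push_cast; ring

variable {C : Type*} [CommRing C] [Algebra ℝ C]

theorem PD.poly {f f' : ℝ → C} (h : PD f f') : ∃ P : Polynomial C,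
    (∀ t : ℝ, f t = P.eval (algebraMap ℝ C t)) ∧
    (∀ t : ℝ, f' t = P.derivative.eval (algebraMap ℝ C t)) := by
  induction h with
  | mono k v =>
    refine ⟨Polynomial.monomial (k+1) v, fun t => ?_, fun t => ?_⟩
    · simp [Algebra.smul_def, mul_comm]
    · simp [Algebra.smul_def, Polynomial.derivative_monomial]; ring
  | const v => exact ⟨Polynomial.C v, fun t => by simp, fun t => by simp⟩
  | add _ _ h1 h2 =>
    obtain ⟨P, hP, hP'⟩ := h1
    obtain ⟨Q, hQ, hQ'⟩ := h2
    exact ⟨P + Q, fun t => by simp [hP, hQ], fun t => by simp [hP', hQ']⟩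

theorem poly_uniq (P : Polynomial C) (h : ∀ t : ℝ, P.eval (algebraMap ℝ C t) = 0) : P = 0 := by
  ext k
  rw [Polynomial.coeff_zero, ← Module.forall_dual_apply_eq_zero_iff ℝ]
  intro φ
  let Q : Polynomial ℝ := ∑ j ∈ Finset.range (P.natDegree + 1), Polynomial.monomial j (φ (P.coeff j))
  have hQ : Q = 0 := by
    apply Polynomial.funext
    intro t
    have := congrArg φ (h t)
    rw [Polynomial.eval_eq_sum_range, map_sum] at this
    simp only [Q, Polynomial.eval_finsetSum, Polynomial.eval_monomial, Polynomial.eval_zero]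
    rw [map_zero] at this
    rw [← this]
    refine Finset.sum_congr rfl fun j _ => ?_
    rw [← map_pow, mul_comm (P.coeff j), ← Algebra.smul_def, map_smul, smul_eq_mul, mul_comm]
  have := congrArg (fun q => Polynomial.coeff q k) hQ
  simp only [Q, Polynomial.finsetSum_coeff, Polynomial.coeff_monomial, Polynomial.coeff_zero] at this
  rw [Finset.sum_ite_eq'] at this
  by_cases hk : k ∈ Finset.range (P.natDegree + 1)
  · simpa [hk] using this
  · rw [Polynomial.coeff_eq_zero_of_natDegree_lt, map_zero]
    simpa using hk

theorem int_deriv (P : Polynomial C) : ∀ N, P.natDegree < N →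
    ∑ k ∈ Finset.range N, ((1 : ℝ) ^ (k + 1) / ((k : ℝ) + 1)) • P.derivative.coeff k =
      P.eval 1 - P.eval 0 := by
  intro N hN
  rw [Polynomial.eval_eq_sum_range' (n := N + 1) (by omega), Finset.sum_range_succ']
  rw [← Polynomial.coeff_zero_eq_eval_zero]
  simp only [one_pow, mul_one, add_sub_cancel_right]
  refine Finset.sum_congr rfl fun k _ => ?_
  rw [Polynomial.coeff_derivative]
  have : ((k : C) + 1) = algebraMap ℝ C ((k : ℝ) + 1) := by simp
  rw [this, mul_comm, ← Algebra.smul_def, smul_smul]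
  have : (k : ℝ) + 1 ≠ 0 := by positivity
  rw [one_div, inv_mul_cancel₀ this, one_smul]

theorem PD.int {f f' : ℝ → C} (h : PD f f') : intPolyTo 1 f' = f 1 - f 0 := by
  obtain ⟨P, hP, hP'⟩ := h.poly
  have hex : ∃ Q : Polynomial C, ∀ t : ℝ, f' t = Polynomial.eval (algebraMap ℝ C t) Q := ⟨_, hP'⟩
  unfold intPolyTo
  rw [dif_pos hex]
  have hQ : hex.choose = P.derivative := by
    rw [← sub_eq_zero]
    apply poly_uniq
    intro t
    rw [Polynomial.eval_sub, ← hP' t, ← hex.choose_spec t, sub_self]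
  rw [hQ, hP, hP, map_one, map_zero, ← int_deriv P (P.natDegree + 1) (by omega)]
  apply Finset.sum_subset
  · intro k; simp only [Finset.mem_range]
    have := Polynomial.natDegree_derivative_le P
    omega
  · intro k _ hk
    rw [Polynomial.coeff_eq_zero_of_natDegree_lt, smul_zero]
    simpa using hk
end poly

section pdf
open LF
variable {L : Type*} {V : Type*} [AddCommGroup V] [Module ℝ V]
/-- valuewise polynomial families -/
def PDF (f f' : ℝ → LF L V) : Prop := ∀ l, PD (fun t => f t l) (fun t => f' t l)

theorem PDF.sg {f f' : ℝ → LF L V} (h : PDF f f') : PDF (fun t => LF.sg (f t)) (fun t => LF.sg (f' t)) := by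
  intro l
  exact ((h l).map ((-1 : ℤ) ^ l.length • LinearMap.id)).congr (fun t => rfl) (fun t => rfl)
theorem PDF.io {f f' : ℝ → LF L V} (h : PDF f f') (a : L) :
    PDF (fun t => LF.io a (f t)) (fun t => LF.io a (f' t)) := fun l => h (a :: l)

theorem PDF.mul_ap {A : Type*} [Ring A] [Algebra ℝ A] (l : List L) : ∀ {f f' g g' : ℝ → LF L A},
    PDF f f' → PDF g g' → PD (fun t => (f t * g t) l) (fun t => (f' t * g t + f t * g' t) l) := by
  induction l with
  | nil =>
    intro f f' g g' hf hg
    exact ((hf []).mul (hg [])).congr (fun t => rfl) (fun t => rfl)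
  | cons a l ih =>
    intro f f' g g' hf hg
    refine ((ih (hf.io a) hg).add (ih hf.sg (hg.io a))).congr (fun t => rfl) (fun t => ?_)
    simp only [LF.add_apply, mul_cons]; abel
theorem PDF.mul {A : Type*} [Ring A] [Algebra ℝ A] {f f' g g' : ℝ → LF L A}
    (hf : PDF f f') (hg : PDF g g') : PDF (fun t => f t * g t) (fun t => f' t * g t + f t * g' t) :=
  fun l => PDF.mul_ap l hf hg

/-- derivative of powers -/
def dpow {A : Type*} [Ring A] (f f' : A) : ℕ → A
  | 0 => 0
  | k + 1 => f' * f ^ k + f * dpow f f' k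

theorem PDF.pow {A : Type*} [Ring A] [Algebra ℝ A] {f f' : ℝ → LF L A} (hf : PDF f f') (k : ℕ) :
    PDF (fun t => f t ^ k) (fun t => dpow (f t) (f' t) k) := by
  induction k with
  | zero =>
    intro l
    exact (PD.const ((1 : LF L A) l)).congr (fun t => by simp) (fun t => rfl)
  | succ k ih =>
    intro l
    refine (hf.mul ih l).congr (fun t => by simp only [pow_succ']) (fun t => rfl)

variable [LieRing L]
theorem PDF.lie (δ : L → V →ₗ[ℝ] V) (a : L) (l : List L) : ∀ {f f' : ℝ → LF L V}, PDF f f' →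
    PD (fun t => LF.lie (fun a => (δ a).toAddMonoidHom) a (f t) l)
      (fun t => LF.lie (fun a => (δ a).toAddMonoidHom) a (f' t) l) := by
  induction l with
  | nil => intro f f' h; exact (h []).map (δ a)
  | cons b l ih => intro f f' h; exact (ih (h.io b)).sub (h _)
theorem PDF.d (δ : L → V →ₗ[ℝ] V) (l : List L) : ∀ {f f' : ℝ → LF L V}, PDF f f' →
    PD (fun t => LF.d (fun a => (δ a).toAddMonoidHom) (f t) l)
      (fun t => LF.d (fun a => (δ a).toAddMonoidHom) (f' t) l) := by
  induction l with
  | nil => intro f f' h; exact PD.const 0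
  | cons b l ih => intro f f' h; exact (PDF.lie δ b l h).sub (ih (h.io b))

theorem tr_dpow {A : Type*} [Ring A] (T : A →+ V) (hT : ∀ x y, T (x * y) = T (y * x))
    (R R' : LF L A) (hR : LF.sg R = R) (l : List L) (k : ℕ) : ∀ j,
    T ((R ^ j * dpow R R' (k + 1)) l) = (k + 1) • T ((R' * R ^ (j + k)) l) := by
  induction k with
  | zero =>
    intro j
    simp only [dpow, mul_zero, add_zero, pow_zero, mul_one, zero_add, one_smul]
    exact (tr_aux T hT l).1 _ _ (sg_pow hR j)
  | succ k ih =>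
    intro j
    rw [dpow, mul_add, LF.add_apply, map_add, ← mul_assoc, ← mul_assoc, ← pow_succ, ih (j+1), mul_assoc,
      (tr_aux T hT l).1 _ _ (sg_pow hR j), mul_assoc, ← pow_add]
    rw [show k + 1 + j = j + (k+1) by omega, show j + 1 + k = j + (k+1) by omega]
    simp only [add_smul, one_smul]; abel
end pdf

section geom
open LF
variable {L : Type*} {C : Type*} {E : Type*}
    [LieRing L] [LieAlgebra ℝ L] [CommRing C] [Algebra ℝ C]
    [AddCommGroup E] [Module ℝ E] [Module C E] [IsScalarTower ℝ C E]

/-- restriction of scalars -/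
def rs : Module.End C E →+* Module.End ℝ E where
  toFun φ := φ.restrictScalars ℝ
  map_one' := rfl
  map_mul' _ _ := rfl
  map_zero' := rfl
  map_add' _ _ := rfl

theorem rs_apply (φ : Module.End C E) (e : E) : rs φ e = φ e := rfl
theorem rs_inj {φ ψ : Module.End C E} (h : rs φ = rs ψ) : φ = ψ := by
  ext e; exact congrArg (fun x : Module.End ℝ E => x e) h
theorem rs_smul (t : ℝ) (φ : Module.End C E) : rs (t • φ) = t • rs φ := rfl

theorem trR_rs (φ : Module.End C E) : trR C (rs φ) = LinearMap.trace C E φ := by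
  have hex : ∃ g : E →ₗ[C] E, ⇑g = ⇑(rs φ) := ⟨φ, rfl⟩
  unfold trR
  rw [dif_pos hex]
  congr 1
  ext e
  rw [hex.choose_spec]; rfl

/-- lift of a `C`-linear real endomorphism -/
def lf (b : Module.End ℝ E) (h : ∀ (c : C) e, b (c • e) = c • b e) : Module.End C E :=
  { toFun := b, map_add' := b.map_add, map_smul' := h }
theorem rs_lf (b : Module.End ℝ E) (h : ∀ (c : C) e, b (c • e) = c • b e) : rs (lf b h) = b := rfl

variable {ρ : L →ₗ[ℝ] Derivation ℝ C C}

/-- induced action on endomorphisms -/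
def act {D : L →ₗ[ℝ] Module.End ℝ E} (h : IsConn ρ D) (a : L) :
    Module.End C E →+ Module.End C E where
  toFun φ := lf (D a * rs φ - rs φ * D a) (by
    intro c e
    simp [rs_apply, h a c, smul_sub])
  map_zero' := rs_inj (by rw [rs_lf]; simp)
  map_add' φ ψ := by
    ext e
    show D a (φ e + ψ e) - (φ (D a e) + ψ (D a e)) =
      (D a (φ e) - φ (D a e)) + (D a (ψ e) - ψ (D a e))
    rw [map_add]; abel

theorem rs_act {D : L →ₗ[ℝ] Module.End ℝ E} (h : IsConn ρ D) (a : L) (φ : Module.End C E) :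
  rs (act h a φ) = D a * rs φ - rs φ * D a := rfl

theorem act_mul {D : L →ₗ[ℝ] Module.End ℝ E} (h : IsConn ρ D) (a : L) (φ ψ : Module.End C E) :
    act h a (φ * ψ) = act h a φ * ψ + φ * act h a ψ := by
  apply rs_inj
  simp only [map_add, map_mul, rs_act]
  noncomm_ring

/-- curvature with values in `End C E` -/
def cuC (hρ : ∀ (a b : L) (f : C), ρ ⁅a, b⁆ f = ρ a (ρ b f) - ρ b (ρ a f))
    {D : L →ₗ[ℝ] Module.End ℝ E} (h : IsConn ρ D) (a b : L) : Module.End C E :=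
  lf (curv D a b) (by
    intro c e
    simp only [curv, LinearMap.sub_apply, Module.End.mul_apply, h _ c, map_add, h _ (ρ _ c),
      hρ, smul_sub, sub_smul]
    abel)

/-- curvature cochain -/
def cuF (hρ : ∀ (a b : L) (f : C), ρ ⁅a, b⁆ f = ρ a (ρ b f) - ρ b (ρ a f))
    {D : L →ₗ[ℝ] Module.End ℝ E} (h : IsConn ρ D) : LF L (Module.End C E)
  | [a, b] => cuC hρ h a b
  | _ => 0

/-- difference of connections -/
def laC {D0 D1 : L →ₗ[ℝ] Module.End ℝ E} (h0 : IsConn ρ D0) (h1 : IsConn ρ D1) (a : L) :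
    Module.End C E :=
  lf ((D1 - D0) a) (by
    intro c e
    simp only [LinearMap.sub_apply, h0 a c, h1 a c, smul_sub]; abel)

theorem rs_laC {D0 D1 : L →ₗ[ℝ] Module.End ℝ E} (h0 : IsConn ρ D0) (h1 : IsConn ρ D1) (a : L) :
    rs (laC h0 h1 a) = D1 a - D0 a := rfl

/-- difference cochain -/
def laF {D0 D1 : L →ₗ[ℝ] Module.End ℝ E} (h0 : IsConn ρ D0) (h1 : IsConn ρ D1) :
    LF L (Module.End C E)
  | [a] => laC h0 h1 a
  | _ => 0

theorem conn_t {D0 D1 : L →ₗ[ℝ] Module.End ℝ E} (h0 : IsConn ρ D0) (h1 : IsConn ρ D1) (t : ℝ) :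
    IsConn ρ (D0 + t • (D1 - D0)) := by
  intro a f e
  simp only [LinearMap.add_apply, LinearMap.smul_apply, LinearMap.sub_apply, h0 a f, h1 a f,
    smul_add, smul_sub, smul_comm t f]
  abel

variable (hρ : ∀ (a b : L) (f : C), ρ ⁅a, b⁆ f = ρ a (ρ b f) - ρ b (ρ a f))

theorem cuF_sup {D : L →ₗ[ℝ] Module.End ℝ E} (h : IsConn ρ D) : Sup 2 (cuF hρ h) := by
  intro l hl
  match l with
  | [] => rfl
  | [a] => rfl
  | [a, b] => simp at hl
  | a :: b :: c :: l => rfl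
theorem laF_sup {D0 D1 : L →ₗ[ℝ] Module.End ℝ E} (h0 : IsConn ρ D0) (h1 : IsConn ρ D1) :
    Sup 1 (laF h0 h1) := by
  intro l hl
  match l with
  | [] => rfl
  | [a] => simp at hl
  | a :: b :: l => rfl
theorem cuF_alt {D : L →ₗ[ℝ] Module.End ℝ E} (h : IsConn ρ D) : Alt (cuF hρ h) := by
  intro u a b v
  match u, v with
  | [], [] => 
    apply rs_inj
    show curv D a b = - curv D b a
    rw [curv, curv, ← lie_skew b a, map_neg]; abel
  | [], c :: v => exact neg_zero.symm
  | c :: u, v =>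
    rw [cuF_sup hρ h _ (by simp; omega), cuF_sup hρ h _ (by simp; omega), neg_zero]
theorem laF_alt {D0 D1 : L →ₗ[ℝ] Module.End ℝ E} (h0 : IsConn ρ D0) (h1 : IsConn ρ D1) :
    Alt (laF h0 h1) := by
  intro u a b v
  rw [laF_sup h0 h1 _ (by simp; omega), laF_sup h0 h1 _ (by simp; omega), neg_zero]
theorem cuF_sg {D : L →ₗ[ℝ] Module.End ℝ E} (h : IsConn ρ D) : sg (cuF hρ h) = cuF hρ h := by
  ext1 l
  rw [sg_apply]
  by_cases hl : l.length = 2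
  · simp [hl]
  · rw [cuF_sup hρ h l hl, smul_zero]
theorem laF_sg {D0 D1 : L →ₗ[ℝ] Module.End ℝ E} (h0 : IsConn ρ D0) (h1 : IsConn ρ D1) :
    sg (laF h0 h1) = - laF h0 h1 := by
  ext1 l
  rw [sg_apply, LF.neg_apply]
  by_cases hl : l.length = 1
  · simp [hl]
  · rw [laF_sup h0 h1 l hl, smul_zero, neg_zero]

theorem bianchi {D : L →ₗ[ℝ] Module.End ℝ E} (h : IsConn ρ D) : d (act h) (cuF hρ h) = 0 := by
  have e0 : cuF hρ h [] = 0 := rfl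
  have e1 : ∀ a, cuF hρ h [a] = 0 := fun _ => rfl
  have e2 : ∀ a b, cuF hρ h [a, b] = cuC hρ h a b := fun _ _ => rfl
  have e3 : ∀ a b c l, cuF hρ h (a :: b :: c :: l) = 0 := fun _ _ _ _ => rfl
  have i3 : ∀ a b c, io c (io b (io a (cuF hρ h))) = 0 := fun _ _ _ => rfl
  ext1 l
  match l with
  | [] => rfl
  | [a] => simp [d_cons, lie_nil, d_nil, e0]
  | [a, b] => simp [d_cons, lie_cons, lie_nil, d_nil, e1]
  | [a, b, c] =>
    simp only [d_cons, lie_cons, lie_nil, d_nil, io_apply, e2, LF.zero_apply]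
    apply rs_inj
    have r2 : ∀ a b, rs (cuC hρ h a b) = D a * D b - D b * D a - D ⁅a, b⁆ := fun _ _ => rfl
    simp only [map_sub, map_zero, rs_act, r2]
    have j : ⁅⁅a, b⁆, c⁆ = ⁅a, ⁅b, c⁆⁆ - ⁅b, ⁅a, c⁆⁆ := lie_lie a b c
    rw [j, map_sub]
    noncomm_ring
  | a :: b :: c :: x :: l =>
    simp [d_cons, lie_cons, i3, LF.lie_zero, io_zero, d_zero, e3]

theorem d_laF {D0 D1 D : L →ₗ[ℝ] Module.End ℝ E} (h0 : IsConn ρ D0) (h1 : IsConn ρ D1)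
    (h : IsConn ρ D) (a b : L) : d (act h) (laF h0 h1) [a, b] =
     act h a (laC h0 h1 b) - act h b (laC h0 h1 a) - laC h0 h1 ⁅a, b⁆ := by
  have e0 : laF h0 h1 [] = 0 := rfl
  have e1 : ∀ a, laF h0 h1 [a] = laC h0 h1 a := fun _ => rfl
  simp only [d_cons, lie_cons, lie_nil, d_nil, io_apply, e1]
  abel

theorem d_laF_sup {D0 D1 D : L →ₗ[ℝ] Module.End ℝ E} (h0 : IsConn ρ D0) (h1 : IsConn ρ D1)
    (h : IsConn ρ D) : Sup 2 (d (act h) (laF h0 h1)) := by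
  have e0 : laF h0 h1 [] = 0 := rfl
  have e3 : ∀ a b l, laF h0 h1 (a :: b :: l) = 0 := fun _ _ _ => rfl
  have i3 : ∀ a b, io b (io a (laF h0 h1)) = 0 := fun _ _ => rfl
  intro l hl
  match l with
  | [] => rfl
  | [a] => simp [d_cons, lie_nil, d_nil, e0]
  | [a, b] => simp at hl
  | a :: b :: c :: l => simp [d_cons, lie_cons, i3, LF.lie_zero, io_zero, d_zero, e3]

theorem pdf_cu {D0 D1 : L →ₗ[ℝ] Module.End ℝ E} (h0 : IsConn ρ D0) (h1 : IsConn ρ D1) :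
    PDF (fun t => cuF hρ (conn_t h0 h1 t)) (fun t => d (act (conn_t h0 h1 t)) (laF h0 h1)) := by
  intro l
  by_cases hl : l.length = 2
  · obtain ⟨a, b, rfl⟩ := List.length_eq_two.1 hl
    refine (((PD.const (cuC hρ h0 a b)).add (PD.mono 0 (act h0 a (laC h0 h1 b) - 
      act h0 b (laC h0 h1 a) - laC h0 h1 ⁅a, b⁆))).add
      (PD.mono 1 (laC h0 h1 a * laC h0 h1 b - laC h0 h1 b * laC h0 h1 a))).congr
      (fun t => ?_) (fun t => ?_)
    · apply rs_inj
      have r1 : rs (cuF hρ (conn_t h0 h1 t) [a, b]) = curv (D0 + t • (D1 - D0)) a b := rfl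
      have r2 : rs (cuC hρ h0 a b) = curv D0 a b := rfl
      rw [r1]
      simp only [map_add, rs_smul, map_sub, map_mul, rs_act, rs_laC, r2, curv,
        LinearMap.add_apply, LinearMap.smul_apply, LinearMap.sub_apply]
      simp only [mul_add, add_mul, mul_sub, sub_mul, smul_mul_assoc, mul_smul_comm, smul_smul,
        smul_sub, smul_add]
      module
    · refine (d_laF h0 h1 _ a b).trans ?_
      apply rs_inj
      simp only [map_add, rs_smul, map_sub, map_mul, rs_act, rs_laC, 
        LinearMap.add_apply, LinearMap.smul_apply, LinearMap.sub_apply, map_zero]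
      simp only [mul_add, add_mul, mul_sub, sub_mul, smul_mul_assoc, mul_smul_comm, smul_smul,
        smul_sub, smul_add]
      push_cast
      module
  · refine (PD.const 0).congr (fun t => cuF_sup hρ _ l hl) (fun t => d_laF_sup h0 h1 _ l hl)

theorem tr_act [Module.Finite C E] [Module.Free C E] {D : L →ₗ[ℝ] Module.End ℝ E}
    (h : IsConn ρ D) (a : L) (φ : Module.End C E) :
    LinearMap.trace C E (act h a φ) = ρ a (LinearMap.trace C E φ) := by
  classical
  let b := Module.Free.chooseBasis C E
  -- the flat connection
  let F : E → E := fun e => ∑ i, ρ a (b.repr e i) • b i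
  have hFadd : ∀ x y, F (x + y) = F x + F y := by
    intro x y; simp [F, add_smul, Finset.sum_add_distrib]
  have hFs : ∀ (c : C) x, F (c • x) = c • F x + ρ a c • x := by
    intro c x
    conv_rhs => rw [← b.sum_repr x]
    simp only [F, map_smul, Finsupp.smul_apply, smul_eq_mul, Derivation.leibniz, add_smul,
      Finset.sum_add_distrib, Finset.smul_sum, smul_smul]
    simp [b.sum_repr, mul_comm, Finsupp.single_apply]
  let N : Module.End C E :=
    { toFun := fun e => D a e - F e
      map_add' := fun x y => by rw [map_add, hFadd]; abel
      map_smul' := fun c x => by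
        simp only [h a c, hFs, RingHom.id_apply, smul_sub]; abel }
  have hFb : ∀ i, F (b i) = 0 := by
    intro i
    apply Finset.sum_eq_zero
    intro j _
    rw [b.repr_self, Finsupp.single_apply]
    split_ifs <;> simp
  let G : Module.End C E := act h a φ - (N * φ - φ * N)
  have hG : ∀ e, G e = F (φ e) - φ (F e) := by
    intro e
    show (D a (φ e) - φ (D a e)) - ((D a (φ e) - F (φ e)) - φ (D a e - F e)) = _
    rw [map_sub]; abel
  have h1 : LinearMap.trace C E (act h a φ) = LinearMap.trace C E G := by
    simp only [G, map_sub, LinearMap.trace_mul_comm C N φ, sub_self, sub_zero]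
  rw [h1, LinearMap.trace_eq_matrix_trace C b, LinearMap.trace_eq_matrix_trace C b,
    Matrix.trace, Matrix.trace, map_sum]
  refine Finset.sum_congr rfl fun i _ => ?_
  simp only [Matrix.diag_apply, LinearMap.toMatrix_apply, hG, hFb, map_zero, sub_zero]
  simp only [F, map_sum, map_smul, Finsupp.coe_finsetSum, Finset.sum_apply, Finsupp.smul_apply,
    b.repr_self, Finsupp.single_apply, smul_eq_mul]
  simp
end geom

section bridge
open LF
theorem wedge_eq {L E : Type*} [AddCommGroup E] [Module ℝ E] {m n : ℕ}
    (ω : (Fin m → L) → Module.End ℝ E) (η : (Fin n → L) → Module.End ℝ E)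
    (f g : LF L (Module.End ℝ E)) (hω : ∀ a, ω a = f (List.ofFn a)) (hη : ∀ a, η a = g (List.ofFn a))
    (hf : Alt f) (hs : Sup m f) (hg : Alt g) (a : Fin (m + n) → L) :
    wedge ω η a = (f * g) (List.ofFn a) := by
  unfold wedge
  have : ∀ τ : Equiv.Perm (Fin (m + n)), ω (fun i => a (τ (Fin.castAdd n i))) * 
      η (fun j => a (τ (Fin.natAdd m j))) = cc m f g (List.ofFn fun i => a (τ i)) := by
    intro τ
    rw [hω, hη, List.ofFn_add, cc, List.take_left' (by simp), List.drop_left' (by simp)]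
    rfl
  simp only [this]
  rw [al_ofFn, al_cc n m f g _ hf hs hg (by simp), ← Nat.cast_smul_eq_nsmul ℝ, smul_smul]
  rw [Nat.cast_mul, inv_mul_cancel₀ (by positivity), one_smul]

theorem wpow_eq {L E : Type*} [AddCommGroup E] [Module ℝ E] (R : (Fin 2 → L) → Module.End ℝ E)
    (f : LF L (Module.End ℝ E)) (hR : ∀ a, R a = f (List.ofFn a)) (hf : Alt f) (hs : Sup 2 f)
    (p : ℕ) : ∀ a, wpow R p a = (f ^ p) (List.ofFn a) := by
  induction p with
  | zero => intro a; simp [wpow, one_nil]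
  | succ p ih =>
    intro a
    have e : wpow R (p + 1) a =
        wedge R (wpow R p) (fun i : Fin (2 + 2 * p) => a (Fin.cast (by omega) i)) := by
      rw [wpow]
    rw [e, wedge_eq R (wpow R p) f (f ^ p) hR ih hf hs (hf.pow p), pow_succ',
      List.ofFn_congr (show 2 * (p + 1) = 2 + 2 * p by omega) a]

theorem dGen_eq {L V : Type*} [LieRing L] [AddCommGroup V] (δ : L → V →+ V) {m : ℕ}
    (ω : (Fin (m + 1) → L) → V) (f : LF L V) (hω : ∀ a, ω a = f (List.ofFn a)) (hf : Alt f) 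
    (a : Fin (m + 1 + 1) → L) : dGen (fun a v => δ a v) ω a = d δ f (List.ofFn a) := by
  rw [dGen, d_alt δ _ f hf, ← th_ofFn, ← q_ofFn _ _ _ hf]
  simp only [hω]
  rfl

theorem Alt.mp {L V W : Type*} [AddCommGroup V] [AddCommGroup W] (T : V →+ W) {f : LF L V}
    (h : Alt f) : Alt (mp T f) := by
  intro u a b v
  simp only [LF.mp]; rw [h, map_neg]
end bridge

open LF

/-- the Chern–Simons transgression formula for a pair of ℝ-linear
connections: `d_ρ(cs_p(∇⁰,∇¹)) = ch_p(∇¹) − ch_p(∇⁰)`. -/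
theorem stmt5 {L : Type*} {C : Type*} {E : Type*}
    [LieRing L] [LieAlgebra ℝ L] [CommRing C] [Algebra ℝ C] [Module C L]
    [AddCommGroup E] [Module ℝ E] [Module C E] [IsScalarTower ℝ C E]
    [Module.Finite C E] [Module.Free C E]
    (ρ : L →ₗ[ℝ] Derivation ℝ C C)
    (hρ : ∀ (a b : L) (f : C), ρ ⁅a, b⁆ f = ρ a (ρ b f) - ρ b (ρ a f))
    (hLeib : ∀ (a b : L) (f : C), ⁅a, f • b⁆ = f • ⁅a, b⁆ + ρ a f • b)
    (D0 D1 : L →ₗ[ℝ] Module.End ℝ E) (h0 : IsConn ρ D0) (h1 : IsConn ρ D1)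
    (p : ℕ) (hp : 1 ≤ p) :
    ∀ a : Fin (2 * (p - 1) + 1 + 1) → L,
      dRho ρ (csPair C D0 D1 p) a
        = chp C D1 p (fun i => a (Fin.cast (by omega) i))
          - chp C D0 p (fun i => a (Fin.cast (by omega) i)) := by
  intro a
  -- curvature powers in list form
  have hcu : ∀ (D : L →ₗ[ℝ] Module.End ℝ E) (h : IsConn ρ D) (k : ℕ) (v : Fin (2 * k) → L),
      wpow (curv2 D) k v = rs ((cuF hρ h ^ k) (List.ofFn v)) := by
    intro D h k v
    rw [wpow_eq (curv2 D) (mp rs (cuF hρ h)) (fun v => by simp [LF.mp, curv2]; rfl)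
      (Alt.mp rs.toAddMonoidHom (cuF_alt hρ h))
      (fun l hl => by simp [LF.mp, cuF_sup hρ h l hl]), mp_pow]
    rfl
  have hch : ∀ (D : L →ₗ[ℝ] Module.End ℝ E) (h : IsConn ρ D),
      chp C D p (fun i => a (Fin.cast (by omega) i)) =
        LinearMap.trace C E ((cuF hρ h ^ p) (List.ofFn a)) := by
    intro D h
    rw [chp, hcu D h, trR_rs, List.ofFn_congr (show 2 * (p - 1) + 1 + 1 = 2 * p by omega) a]
  obtain ⟨k, rfl⟩ : ∃ k, p = k + 1 := ⟨p - 1, by omega⟩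
  let T : Module.End C E →+ C := (LinearMap.trace C E).toAddMonoidHom
  have hT : ∀ x y, T (x * y) = T (y * x) := fun x y => LinearMap.trace_mul_comm C x y
  let TR : Module.End C E →ₗ[ℝ] C := (LinearMap.trace C E).restrictScalars ℝ
  let R : ℝ → LF L (Module.End C E) := fun t => cuF hρ (conn_t h0 h1 t)
  let la : LF L (Module.End C E) := laF h0 h1
  have hR : PDF R (fun t => d (act (conn_t h0 h1 t)) la) := pdf_cu hρ h0 h1
  have hla : PDF (fun _ : ℝ => la) (fun _ => 0) := fun l => PD.const _
  -- integrand and its antiderivative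
  have hint : ∀ l, ∃ G : ℝ → C, PD G (fun t => TR ((la * R t ^ k) l)) := fun l =>
    ((hla.mul (hR.pow k) l).map TR).anti
  choose G hG using hint
  let CS : LF L C := fun l => ((k + 1 : ℕ) : ℝ) • intPolyTo 1 (fun t => TR ((la * R t ^ k) l))
  have hCS : ∀ v, csPair C D0 D1 (k + 1) v = CS (List.ofFn v) := by
    intro v
    simp only [csPair, CS]
    congr 2
    ext t
    rw [wedge_eq (fun v : Fin 1 → L => (D1 - D0) (v 0)) (wpow (curv2 (D0 + t • (D1 - D0))) (k + 1 - 1))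
      (mp rs la) (mp rs (R t ^ k)) (fun v => by simp [LF.mp]; rfl)
      (fun v => hcu _ (conn_t h0 h1 t) (k + 1 - 1) v)
      (Alt.mp rs.toAddMonoidHom (laF_alt h0 h1))
      (fun l hl => by simp [LF.mp, la, laF_sup h0 h1 l hl])
      (Alt.mp rs.toAddMonoidHom ((cuF_alt hρ _).pow k)), mp_mul_ap, trR_rs]
    rw [List.ofFn_congr (show 2 * (k + 1 - 1) + 1 = 1 + 2 * (k + 1 - 1) by omega) v]
    rfl
  have hCSG : CS = fun l => ((k + 1 : ℕ) : ℝ) • (G l 1 - G l 0) := by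
    funext l; simp only [CS]; rw [(hG l).int]
  have hAlt : Alt CS := by
    intro u x y v
    simp only [CS]
    have e := hG (u ++ y :: x :: v)
    have e2 := (e.map (-LinearMap.id)).congr (g := fun t => -G (u ++ y :: x :: v) t)
      (g' := fun t => TR ((la * R t ^ k) (u ++ x :: y :: v))) (fun t => by simp) (fun t => 
        (congrArg TR (((laF_alt h0 h1).mul ((cuF_alt hρ _).pow k)) u x y v)).trans (map_neg TR _))
    rw [e.int, e2.int, ← smul_neg]; congr 1; abel
  let δ : L → C →ₗ[ℝ] C := fun a => (ρ a : C →ₗ[ℝ] C)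
  have hd : dRho ρ (csPair C D0 D1 (k + 1)) a = d (fun a => (δ a).toAddMonoidHom) CS (List.ofFn a) :=
    dGen_eq (fun a => (δ a).toAddMonoidHom) _ CS hCS hAlt a
  rw [hd, hch D1 h1, hch D0 h0]
  generalize List.ofFn a = l
  -- first primitive
  have p1 : PD (fun t => d (fun a => (δ a).toAddMonoidHom) (fun l => G l t) l)
      (fun t => d (fun a => (δ a).toAddMonoidHom) (fun l => TR ((la * R t ^ k) l)) l) :=
    PDF.d δ l (f := fun t l => G l t) (f' := fun t l => TR ((la * R t ^ k) l)) hG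
  have p2 : PD (fun t => TR ((R t ^ (k + 1)) l)) 
      (fun t => TR (dpow (R t) (d (act (conn_t h0 h1 t)) la) (k + 1) l)) :=
    (hR.pow (k + 1) l).map TR
  have key : ∀ t, TR (dpow (R t) (d (act (conn_t h0 h1 t)) la) (k + 1) l) =
      ((k + 1 : ℕ) : ℝ) • d (fun a => (δ a).toAddMonoidHom) (fun l => TR ((la * R t ^ k) l)) l := by
    intro t
    have q1 := tr_dpow T hT (R t) (d (act (conn_t h0 h1 t)) la) (cuF_sg hρ _) l k 0
    rw [pow_zero, one_mul, zero_add] at q1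
    have q2 := d_mp T (act (conn_t h0 h1 t)) (fun a => (δ a).toAddMonoidHom)
      (fun a x => tr_act (conn_t h0 h1 t) a x) l (la * R t ^ k)
    rw [d_mul _ (act_mul _), d_pow _ (act_mul _) (bianchi hρ _), mul_zero, add_zero] at q2
    rw [Nat.cast_smul_eq_nsmul]
    refine q1.trans ?_
    rw [← q2]; rfl
  have p3 : PD (fun t => ((k + 1 : ℕ) : ℝ) • d (fun a => (δ a).toAddMonoidHom) (fun l => G l t) l)
      (fun t => TR (dpow (R t) (d (act (conn_t h0 h1 t)) la) (k + 1) l)) :=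
    (p1.map (((k + 1 : ℕ) : ℝ) • LinearMap.id)).congr (fun t => by simp) (fun t => by
      rw [key]; simp)
  have fin := p3.int.symm.trans p2.int
  have hR1 : R 1 = cuF hρ h1 := by
    have : ∀ (D : L →ₗ[ℝ] Module.End ℝ E) (h : IsConn ρ D), D = D1 → cuF hρ h = cuF hρ h1 := by
      rintro D h rfl; rfl
    exact this _ _ (by simp)
  have hR0 : R 0 = cuF hρ h0 := by
    have : ∀ (D : L →ₗ[ℝ] Module.End ℝ E) (h : IsConn ρ D), D = D0 → cuF hρ h = cuF hρ h0 := by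
      rintro D h rfl; rfl
    exact this _ _ (by simp)
  rw [hR1, hR0] at fin
  refine Eq.trans ?_ fin
  rw [hCSG]
  have := d_mp (LinearMap.toAddMonoidHom (((k + 1 : ℕ) : ℝ) • (LinearMap.id : C →ₗ[ℝ] C)))
    (fun a => (δ a).toAddMonoidHom) (fun a => (δ a).toAddMonoidHom)
    (fun a x => by
      show ((k + 1 : ℕ) : ℝ) • δ a x = δ a (((k + 1 : ℕ) : ℝ) • x)
      rw [map_smul]) l ((fun l => G l 1 : LF L C) - (fun l => G l 0))
  refine this.trans ?_
  show (((k + 1 : ℕ) : ℝ) • (d (fun a => (δ a).toAddMonoidHom)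
    ((fun l => G l 1 : LF L C) - (fun l => G l 0)) l : C)) = _
  rw [← smul_sub]
  congr 1
  exact congrFun ((dHom (fun a => (δ a).toAddMonoidHom)).map_sub (fun l => G l 1 : LF L C) (fun l => G l 0)) l
end
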